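/- Suppose f is irreducible in ℤ[u^{±1}] and noncyclotomic. Then there exists a compact τ-invariant set C ⊆ Z̄_f × W_f^∘ (compact with respect to the product of the coordinatewise-convergence topology on Z̄_f and the sup-norm topology on W_f^∘) with π₁(C) = Z̄_f, where π₁ is the first coordinate projection. Moreover, for every compact τ-invariant set C ⊆ Z̄_f × W_f^∘ with π₁(C) = Z̄_f, one has h(τ|_C) = h(α_f) and ζ(C) = X_f. -/

import Mathlib

open Filter Topology Polynomial

noncomputable section

/-- `f(σ̄)` on real sequences. -/
def fsR (f : Polynomial ℤ) (w : ℤ → ℝ) : ℤ → ℝ :=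
  fun n => ∑ k ∈ Finset.range (f.natDegree + 1), (f.coeff k : ℝ) * w (n + (k : ℤ))

/-- Bounded real sequences. -/
def Bdd (w : ℤ → ℝ) : Prop := ∃ B : ℝ, ∀ n, |w n| ≤ B

/-- `f` is noncyclotomic. -/
def Noncyclotomic (f : Polynomial ℤ) : Prop :=
  ∀ θ : ℂ, Polynomial.aeval θ f = 0 → ∀ n : ℕ, 0 < n → θ ^ n ≠ 1

/-- The shift `σ̄` on real sequences. -/
def shiftR (w : ℤ → ℝ) : ℤ → ℝ := fun n => w (n + 1)

/-- `σ̄^k` on real sequences. -/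
def shiftIterR (k : ℤ) (w : ℤ → ℝ) : ℤ → ℝ := fun n => w (n + k)

/-- Membership in `W_f = f(σ̄)^{-1}(ℓ^∞(ℤ,ℤ))`. -/
def InWf (f : Polynomial ℤ) (w : ℤ → ℝ) : Prop :=
  Bdd w ∧ ∀ n, ∃ z : ℤ, fsR f w n = (z : ℝ)

/-- `Y_f = W_f ∩ [0,1)^ℤ`. -/
def YfSet (f : Polynomial ℤ) : Set (ℤ → ℝ) :=
  {w | InWf f w ∧ ∀ n, w n ∈ Set.Ico (0:ℝ) 1}

/-- `Z̄_f = f(σ̄)(Ȳ_f)`, where `Ȳ_f` is the closure of `Y_f` in the topology of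
coordinatewise convergence. -/
def ZbarR (f : Polynomial ℤ) : Set (ℤ → ℝ) := fsR f '' closure (YfSet f)

open BoundedContinuousFunction

/-- The circle `ℝ/ℤ`. -/
abbrev Torus := AddCircle (1 : ℝ)

/-- The shift `σ` on `𝕋^ℤ`. -/
def shiftT (x : ℤ → Torus) : ℤ → Torus := fun n => x (n + 1)

/-- `f(σ)` acting on `𝕋^ℤ`. -/
def fsT (f : Polynomial ℤ) (x : ℤ → Torus) : ℤ → Torus :=
  fun n => ∑ k ∈ Finset.range (f.natDegree + 1), f.coeff k • x (n + (k : ℤ))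

/-- `X_f = ker f(σ) ⊆ 𝕋^ℤ`. -/
def Xf (f : Polynomial ℤ) : Set (ℤ → Torus) := {x | ∀ n, fsT f x n = 0}

/-- The sequence `v^Δ`. -/
def vDelta : ℤ → ℝ := fun n => if n = 0 then 1 else 0

/-- `w⁺`. -/
def IsWplus (f : Polynomial ℤ) (w : ℤ → ℝ) : Prop :=
  Bdd w ∧ fsR f w = vDelta ∧ Tendsto w atTop (nhds 0)

/-- `w⁻`. -/
def IsWminus (f : Polynomial ℤ) (w : ℤ → ℝ) : Prop :=
  Bdd w ∧ fsR f w = vDelta ∧ Tendsto w atBot (nhds 0)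

/-- `ξ̄*(v)_k = ∑_{n≥0} v_n w⁻_{k-n} + ∑_{n<0} v_n w⁺_{k-n}`. -/
def xiStar (wp wm : ℤ → ℝ) (v : ℤ → ℤ) : ℤ → ℝ :=
  fun k => ∑' n : ℤ, (v n : ℝ) * (if 0 ≤ n then wm (k - n) else wp (k - n))

/-- The shift on `ℓ^∞(ℤ,ℝ)`, realized as bounded (automatically continuous) functions on
the discrete space `ℤ`, carrying the sup-norm topology. -/
def shiftB (w : ℤ →ᵇ ℝ) : ℤ →ᵇ ℝ :=
  w.compContinuous ⟨fun n => n + 1, continuous_of_discreteTopology⟩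

/-- The shift on integer sequences. -/
def shiftZseq (v : ℤ → ℤ) : ℤ → ℤ := fun n => v (n + 1)

/-- `W_f^∘ = ker f(σ̄) ∩ ℓ^∞(ℤ,ℝ)`, inside `ℤ →ᵇ ℝ` (with its sup-norm topology). -/
def WfCircB (f : Polynomial ℤ) : Set (ℤ →ᵇ ℝ) := {w | ∀ n, fsR f (⇑w) n = 0}

/-- The integer-sequence version of `Z̄_f`. -/
def ZbarZ (f : Polynomial ℤ) : Set (ℤ → ℤ) := {v | (fun n => (v n : ℝ)) ∈ ZbarR f}

/-- The skew-product map `τ(v, w) = (σ̄ v, σ̄ w + v₀ · σ̄(w^∘))` on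
`(ℤ → ℤ) × (ℤ →ᵇ ℝ)` (coordinatewise-convergence topology on the first factor,
sup-norm topology on the second). -/
def tauMap (w0 : ℤ →ᵇ ℝ) (p : (ℤ → ℤ) × (ℤ →ᵇ ℝ)) : (ℤ → ℤ) × (ℤ →ᵇ ℝ) :=
  (shiftZseq p.1, shiftB p.2 + p.1 0 • shiftB w0)

/-- `ζ(v, w) = ρ(ξ̄*(v) + w) ∈ 𝕋^ℤ`. -/
def zetaMap (wp wm : ℤ → ℝ) (p : (ℤ → ℤ) × (ℤ →ᵇ ℝ)) : ℤ → Torus :=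
  fun k => ((xiStar wp wm p.1 k + p.2 k : ℝ) : Torus)

/-!
For `y ∈ Ȳ_f`, summation by parts gives `ξ̄*(f(σ̄) y) = y + w_y`, where `w_y ∈ W_f^∘` depends
continuously on finitely many coordinates of `y`. Hence `{(f(σ̄) y, -w_y) : y ∈ Ȳ_f}` is a compact
`τ`-invariant set lying over `Z̄_f`.

Let `C` be any such set. Since `f` is noncyclotomic, `α_f` is mixing, while the shift acts on the
finite-dimensional space `W_f^∘` by isometries and is therefore recurrent. A Baire argument yields
`x₀ ∈ X_f` whose orbit comes close to every point of `X_f` at times at which the shift is nearly the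
identity on `W_f^∘`. As `ζ(C)` contains `x₀ + ρ(w)` for some `w ∈ W_f^∘`, it contains `X_f + ρ(w)`,
and `ρ(w) ∈ X_f`.

For the entropy, `ζ` is a semiconjugacy, so `h(α_f) ≤ h(τ|_C)`. Conversely, `τ` acts by isometries
on the fibres, so it is enough to count the blocks of `Z̄_f` coming from lifts `y ∈ Y_f` that stay
close to a given orbit of `α_f`. Two such lifts differ, modulo integers, by a small solution of the
linear recurrence `f(σ̄) d = 0`, and the block is determined by the sign pattern of an affine
function of `d`. By the Sauer–Shelah lemma, only polynomially many sign patterns occur.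
-/

section Shift

variable (R M ι : Type*) [Semiring R] [AddCommMonoid M] [Module R M] [AddMonoidWithOne ι]

/-- The shift `(w_n) ↦ (w_{n+1})` on the `M`-valued sequences indexed by `ι` (here `ℕ` or `ℤ`), as
an `R`-linear map, so that a polynomial `f` acts on sequences by `aeval (shiftEnd R M ι) f`. -/
def shiftEnd : Module.End R (ι → M) := LinearMap.funLeft R M (· + 1)

variable {R M ι}

@[simp]
lemma shiftEnd_apply (w : ι → M) (n : ι) : shiftEnd R M ι w n = w (n + 1) := rfl

@[simp]
lemma shiftEnd_pow_apply (k : ℕ) (w : ι → M) (n : ι) :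
    (shiftEnd R M ι ^ k) w n = w (n + k) := by
  induction k generalizing n with
  | zero => simp
  | succ k ih => rw [pow_succ', Module.End.mul_apply, shiftEnd_apply, ih, add_assoc,
      Nat.cast_succ, Nat.cast_add_one_comm]

end Shift

lemma aeval_shiftEnd_apply {R S M ι : Type*} [CommSemiring S] [Semiring R] [AddCommMonoid M]
    [Module R M] [Module S M] [SMulCommClass R S M] [SMulCommClass S R M] [SMul S R]
    [IsScalarTower S R M] [AddMonoidWithOne ι] (f : S[X]) (w : ι → M) (n : ι) :
    aeval (shiftEnd R M ι) f w n =
      ∑ k ∈ Finset.range (f.natDegree + 1), f.coeff k • w (n + k) := by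
  simp [aeval_eq_sum_range, LinearMap.sum_apply]

section Decay

/-- Exponential decay of a sequence in a normed group. -/
def GeometricallyDecaying {E : Type*} [Norm E] (w : ℕ → E) : Prop :=
  ∃ C r : ℝ, 0 ≤ C ∧ 0 ≤ r ∧ r < 1 ∧ ∀ n, ‖w n‖ ≤ C * r ^ n

variable {𝕜 E : Type*} [NormedField 𝕜] [SeminormedAddCommGroup E] [NormedSpace 𝕜 E]
  {θ : 𝕜} {w : ℕ → E}

lemma GeometricallyDecaying.summable_norm (h : GeometricallyDecaying w) :
    Summable fun n => ‖w n‖ := by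
  obtain ⟨C, r, -, hr, hr1, hw⟩ := h
  exact .of_nonneg_of_le (fun n => norm_nonneg _) hw
    ((summable_geometric_of_lt_one hr hr1).mul_left C)

lemma GeometricallyDecaying.of_contracting_step (hθ : ‖θ‖ < 1)
    (h : GeometricallyDecaying fun n => w (n + 1) - θ • w n) : GeometricallyDecaying w := by
  obtain ⟨C, r, -, hr, hr1, hstep⟩ := h
  obtain ⟨s, hs, hs1⟩ := exists_between (max_lt hθ hr1)
  have hθs : 0 < s - ‖θ‖ := sub_pos.2 ((le_max_left _ _).trans_lt hs)
  have hrs : r ≤ s := (le_max_right _ _).trans hs.le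
  have hs0 : 0 ≤ s := hr.trans hrs
  set D := max ‖w 0‖ (C / (s - ‖θ‖))
  have hD : 0 ≤ D := le_max_of_le_left (norm_nonneg _)
  have hCD : C ≤ D * (s - ‖θ‖) := (div_le_iff₀ hθs).1 (le_max_right _ _)
  refine ⟨D, s, hD, hs0, hs1, fun n => ?_⟩
  induction n with
  | zero => simp [D]
  | succ n ih =>
    calc ‖w (n + 1)‖ = ‖θ • w n + (w (n + 1) - θ • w n)‖ := by rw [add_sub_cancel]
      _ ≤ ‖θ‖ * ‖w n‖ + C * r ^ n := by
          refine (norm_add_le _ _).trans ?_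
          rw [norm_smul]
          gcongr
          exact hstep n
      _ ≤ ‖θ‖ * (D * s ^ n) + D * (s - ‖θ‖) * s ^ n := by gcongr
      _ = D * s ^ (n + 1) := by ring

lemma GeometricallyDecaying.of_expanding_step (hθ : 1 ≤ ‖θ‖) (hw : Tendsto w atTop (𝓝 0))
    (h : GeometricallyDecaying fun n => w (n + 1) - θ • w n) : GeometricallyDecaying w := by
  obtain ⟨C, r, hC, hr, hr1, hstep⟩ := h
  have hr' : 0 < 1 - r := sub_pos.2 hr1
  set D := C / (1 - r)
  have hCD : C = D * (1 - r) := (div_mul_cancel₀ C hr'.ne').symm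
  -- `‖w n‖ - D * r ^ n` increases to `0`, hence is nonpositive.
  have hmono : Monotone fun n => ‖w n‖ - D * r ^ n := by
    refine monotone_nat_of_le_succ fun n => ?_
    have hgrow : ‖w n‖ ≤ ‖w (n + 1)‖ + C * r ^ n :=
      calc ‖w n‖ ≤ ‖θ • w n‖ := by
            rw [norm_smul]; exact le_mul_of_one_le_left (norm_nonneg _) hθ
        _ = ‖w (n + 1) - (w (n + 1) - θ • w n)‖ := by rw [sub_sub_cancel]
        _ ≤ ‖w (n + 1)‖ + C * r ^ n := (norm_sub_le _ _).trans (by gcongr; exact hstep n)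
    have hC_pow : C * r ^ n = D * r ^ n - D * r ^ (n + 1) := by rw [hCD]; ring
    linarith
  have hlim : Tendsto (fun n => ‖w n‖ - D * r ^ n) atTop (𝓝 0) := by
    simpa using hw.norm.sub ((tendsto_pow_atTop_nhds_zero_of_lt_one hr hr1).const_mul D)
  exact ⟨D, r, div_nonneg hC hr'.le, hr, hr1, fun n => sub_nonpos.1 (hmono.ge_of_tendsto hlim n)⟩

lemma geometricallyDecaying_of_aeval_shiftEnd_eq_zero {K : Type*} [NormedField K] [IsAlgClosed K]
    {g : K[X]} (hg : g ≠ 0) {w : ℕ → K} (hw : Tendsto w atTop (𝓝 0))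
    (hgw : aeval (shiftEnd K K ℕ) g w = 0) : GeometricallyDecaying w := by
  induction hd : g.natDegree generalizing g w with
  | zero =>
    rw [eq_C_of_natDegree_eq_zero hd, aeval_C, Module.algebraMap_end_apply] at hgw
    rw [eq_C_of_natDegree_eq_zero hd, Ne, C_eq_zero] at hg
    rw [(smul_eq_zero_iff_right hg).1 hgw]
    exact ⟨0, 0, le_rfl, le_rfl, one_pos, by simp⟩
  | succ d ih =>
    obtain ⟨θ, hθ⟩ := IsAlgClosed.exists_root g (degree_ne_of_natDegree_ne (by simp [hd]))
    obtain ⟨q, rfl⟩ := dvd_iff_isRoot.2 hθ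
    rw [natDegree_mul (X_sub_C_ne_zero θ) (right_ne_zero_of_mul hg), natDegree_X_sub_C] at hd
    set w' := aeval (shiftEnd K K ℕ) (X - Polynomial.C θ) w
    have hw'_apply : w' = fun n => w (n + 1) - θ • w n := by
      ext n; simp [w']
    have hw'_lim : Tendsto w' atTop (𝓝 0) := by
      simpa [hw'_apply, Function.comp_def] using
        (hw.comp (tendsto_add_atTop_nat 1)).sub (hw.const_mul θ)
    have hqw' : aeval (shiftEnd K K ℕ) q w' = 0 := by
      rw [← Module.End.mul_apply, ← map_mul, mul_comm, hgw]
    have hdecay : GeometricallyDecaying fun n => w (n + 1) - θ • w n :=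
      hw'_apply ▸ ih (right_ne_zero_of_mul hg) hw'_lim hqw' (by omega)
    rcases lt_or_ge ‖θ‖ 1 with hlt | hge
    · exact hdecay.of_contracting_step hlt
    · exact hdecay.of_expanding_step hge hw

end Decay

section Operator

variable (f : ℤ[X])

lemma fsR_eq_aeval (w : ℤ → ℝ) : fsR f w = aeval (shiftEnd ℝ ℝ ℤ) f w := by
  ext n
  simp [fsR, aeval_shiftEnd_apply, zsmul_eq_mul]

lemma fsT_eq_aeval (x : ℤ → Torus) : fsT f x = aeval (shiftEnd ℤ Torus ℤ) f x := by
  ext n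
  simp [fsT, aeval_shiftEnd_apply]

lemma fsR_add (w w' : ℤ → ℝ) : fsR f (w + w') = fsR f w + fsR f w' := by
  simp only [fsR_eq_aeval, map_add]

lemma fsR_sub (w w' : ℤ → ℝ) : fsR f (w - w') = fsR f w - fsR f w' := by
  simp only [fsR_eq_aeval, map_sub]

lemma fsR_smul (c : ℝ) (w : ℤ → ℝ) : fsR f (c • w) = c • fsR f w := by
  simp only [fsR_eq_aeval, map_smul]

lemma fsR_shiftIterR (k : ℤ) (w : ℤ → ℝ) : fsR f (shiftIterR k w) = shiftIterR k (fsR f w) := by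
  ext n
  simp only [fsR, shiftIterR, add_right_comm]

lemma fsR_reverse_comp_neg (w : ℤ → ℝ) (n : ℤ) :
    fsR f.reverse (fun i => w (-i)) n = fsR f w (-n - f.natDegree) := by
  have hlong : fsR f.reverse (fun i => w (-i)) n =
      ∑ k ∈ Finset.range (f.natDegree + 1), (f.reverse.coeff k : ℝ) * w (-(n + k)) := by
    refine Finset.sum_subset (Finset.range_mono (by gcongr; exact f.reverse_natDegree_le))
      fun k _ hk => ?_
    rw [coeff_eq_zero_of_natDegree_lt (by simpa using hk), Int.cast_zero, zero_mul]
  rw [hlong, fsR, ← Finset.sum_range_reflect]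
  refine Finset.sum_congr rfl fun k hk => ?_
  have hk' : k ≤ f.natDegree := Nat.lt_succ_iff.1 (Finset.mem_range.1 hk)
  rw [Nat.add_sub_cancel, coeff_reverse, revAt_le (Nat.sub_le _ _), Nat.sub_sub_self hk',
    Nat.cast_sub hk']
  congr 2
  ring

variable {f}

lemma summable_abs_of_eventually_fsR_eq_zero (hf : f ≠ 0) {w : ℤ → ℝ} (hw : Tendsto w atTop (𝓝 0))
    (h : ∀ᶠ n in atTop, fsR f w n = 0) (k : ℤ) : Summable fun n : ℕ => |w (k + n)| := by
  obtain ⟨N, hN⟩ := eventually_atTop.1 h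
  obtain ⟨j, hj⟩ := Int.le.dest (le_max_left k N)
  set u : ℕ → ℂ := fun n => (w (k + (n + j : ℕ)) : ℂ)
  have hu : Tendsto u atTop (𝓝 0) :=
    (Complex.continuous_ofReal.tendsto' 0 0 Complex.ofReal_zero).comp <| hw.comp <|
      tendsto_atTop_add_const_left _ k <| tendsto_natCast_atTop_atTop.comp <|
        tendsto_add_atTop_nat j
  have hfu : aeval (shiftEnd ℂ ℂ ℕ) (f.map (algebraMap ℤ ℂ)) u = 0 := by
    ext n
    have hn := congrArg ((↑) : ℝ → ℂ) (hN (k + (n + j : ℕ)) (by push_cast; omega))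
    rw [aeval_map_algebraMap, aeval_shiftEnd_apply, Pi.zero_apply, ← Complex.ofReal_zero, ← hn]
    simp only [fsR, u, Complex.ofReal_sum, Complex.ofReal_mul, Complex.ofReal_intCast,
      zsmul_eq_mul]
    exact Finset.sum_congr rfl fun i _ => by push_cast; ring_nf
  rw [← summable_nat_add_iff j]
  simpa [u] using (geometricallyDecaying_of_aeval_shiftEnd_eq_zero
    ((Polynomial.map_ne_zero_iff (algebraMap ℤ ℂ).injective_int).2 hf) hu hfu).summable_norm

lemma IsWplus.summable_abs (hf : f ≠ 0) {wp : ℤ → ℝ} (hwp : IsWplus f wp) (k : ℤ) :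
    Summable fun n : ℕ => |wp (k + n)| := by
  refine summable_abs_of_eventually_fsR_eq_zero hf hwp.2.2 ?_ k
  filter_upwards [eventually_gt_atTop 0] with n hn
  rw [hwp.2.1, vDelta, if_neg hn.ne']

lemma IsWminus.summable_abs (hf : f ≠ 0) {wm : ℤ → ℝ} (hwm : IsWminus f wm) (k : ℤ) :
    Summable fun n : ℕ => |wm (k - n)| := by
  have hrev : Summable fun n : ℕ => |wm (-(-k + n))| := by
    refine summable_abs_of_eventually_fsR_eq_zero (f := f.reverse) (w := fun i => wm (-i))
      (by simpa) (hwm.2.2.comp tendsto_neg_atTop_atBot) ?_ (-k)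
    filter_upwards [eventually_gt_atTop 0] with n hn
    rw [fsR_reverse_comp_neg, hwm.2.1, vDelta, if_neg (by omega)]
  simpa [neg_add_rev, ← sub_eq_neg_add, ← sub_eq_add_neg, add_comm] using hrev

end Operator

section Central

/-- Translation by `k` on `ℓ^∞(ℤ,ℝ)`. -/
def translB (k : ℤ) (w : ℤ →ᵇ ℝ) : ℤ →ᵇ ℝ :=
  w.compContinuous ⟨fun n => n + k, continuous_of_discreteTopology⟩

@[simp]
lemma translB_apply (k : ℤ) (w : ℤ →ᵇ ℝ) (n : ℤ) : translB k w n = w (n + k) := rfl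

@[simp]
lemma shiftB_apply (w : ℤ →ᵇ ℝ) (n : ℤ) : shiftB w n = w (n + 1) := rfl

/-- `W_f^∘` as a linear subspace of `ℓ^∞(ℤ,ℝ)`. -/
def centralSubmodule (f : ℤ[X]) : Submodule ℝ (ℤ →ᵇ ℝ) where
  carrier := WfCircB f
  zero_mem' n := by simp [fsR]
  add_mem' {a b} ha hb n := by
    rw [BoundedContinuousFunction.coe_add, fsR_add, Pi.add_apply, ha n, hb n, add_zero]
  smul_mem' c a ha n := (congrFun (fsR_smul f c a) n).trans (by simp [ha n])

lemma translB_mem_centralSubmodule {f : ℤ[X]} {w : ℤ →ᵇ ℝ} (k : ℤ)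
    (hw : w ∈ centralSubmodule f) : translB k w ∈ centralSubmodule f := fun n =>
  (congrFun (fsR_shiftIterR f k w) n).trans (hw _)

/-- The triple `(w⁺, w⁻, w^∘)` of the polynomial `f`, with `w^∘ = w⁻ - w⁺` viewed in
`ℓ^∞(ℤ,ℝ)`. -/
structure IsHomoclinicTriple (f : ℤ[X]) (wp wm : ℤ → ℝ) (w0 : ℤ →ᵇ ℝ) : Prop where
  plus : IsWplus f wp
  minus : IsWminus f wm
  central : ∀ n, w0 n = wm n - wp n

/-- The kernel of `ξ̄*`: the value `w^∓_{k-n}` by which `v_n` enters `ξ̄*(v)_k`. -/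
def xiKernel (wp wm : ℤ → ℝ) (k n : ℤ) : ℝ := if 0 ≤ n then wm (k - n) else wp (k - n)

/-- The amount by which the adjoint of `f(σ̄)`, applied to the kernel of `ξ̄*`, differs at `i` from
a unit mass, as a function of the target coordinate. -/
def kernelDefect (f : ℤ[X]) (w0 : ℤ →ᵇ ℝ) (i : ℤ) : ℤ →ᵇ ℝ :=
  ∑ j ∈ Finset.range (f.natDegree + 1) with Nat.cast j ≤ i,
    (f.coeff j : ℝ) • translB (j - i) w0

/-- The element of `W_f^∘` by which `ξ̄*(f(σ̄) y)` differs from `y`. -/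
def centralDefect (f : ℤ[X]) (w0 : ℤ →ᵇ ℝ) (y : ℤ → ℝ) : ℤ →ᵇ ℝ :=
  ∑ i ∈ Finset.range f.natDegree, y i • kernelDefect f w0 i

lemma continuous_centralDefect (f : ℤ[X]) (w0 : ℤ →ᵇ ℝ) : Continuous (centralDefect f w0) := by
  unfold centralDefect
  fun_prop

variable {f : ℤ[X]} {wp wm : ℤ → ℝ} {w0 : ℤ →ᵇ ℝ}

lemma kernelDefect_apply (i k : ℤ) : kernelDefect f w0 i k =
    ∑ j ∈ Finset.range (f.natDegree + 1) with Nat.cast j ≤ i,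
      (f.coeff j : ℝ) * w0 (k + (j - i)) := by
  simp [kernelDefect, BoundedContinuousFunction.sum_apply]

lemma kernelDefect_eq_zero (h : w0 ∈ centralSubmodule f) {i : ℤ}
    (hi : i ∉ (Finset.range f.natDegree).map Nat.castEmbedding) : kernelDefect f w0 i = 0 := by
  rcases lt_or_ge i 0 with hneg | hnonneg
  · rw [kernelDefect, Finset.filter_false_of_mem fun j _ => by omega, Finset.sum_empty]
  · lift i to ℕ using hnonneg
    have hle : f.natDegree ≤ i := by
      by_contra! hlt
      exact hi (Finset.mem_map.2 ⟨i, Finset.mem_range.2 hlt, rfl⟩)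
    ext k
    rw [kernelDefect_apply, Finset.filter_true_of_mem fun j hj => by
      have := Finset.mem_range.1 hj; omega]
    simpa only [fsR, sub_add_eq_add_sub, add_sub_assoc, BoundedContinuousFunction.coe_zero,
      Pi.zero_apply] using h (k - i)

lemma centralDefect_mem (h : w0 ∈ centralSubmodule f) (y : ℤ → ℝ) :
    centralDefect f w0 y ∈ centralSubmodule f :=
  Submodule.sum_mem _ fun _ _ => Submodule.smul_mem _ _ <| Submodule.sum_mem _ fun _ _ =>
    Submodule.smul_mem _ _ (translB_mem_centralSubmodule _ h)

namespace IsHomoclinicTriple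

variable (h : IsHomoclinicTriple f wp wm w0)
include h

lemma ne_zero : f ≠ 0 := by
  rintro rfl
  simpa [fsR, vDelta] using congrFun h.plus.2.1 0

lemma mem_centralSubmodule : w0 ∈ centralSubmodule f := fun n => by
  rw [show ⇑w0 = wm - wp from funext h.central, fsR_sub, h.plus.2.1, h.minus.2.1, sub_self,
    Pi.zero_apply]

lemma summable_abs_xiKernel (k : ℤ) : Summable fun n => |xiKernel wp wm k n| := by
  refine Summable.of_nat_of_neg_add_one ?_ ?_
  · simpa [xiKernel] using h.minus.summable_abs h.ne_zero k
  · refine (h.plus.summable_abs h.ne_zero (k + 1)).congr fun n => ?_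
    rw [xiKernel, if_neg (by omega), show k - -((n : ℤ) + 1) = k + 1 + n by ring]

end IsHomoclinicTriple

lemma summable_mul_of_bdd {v K : ℤ → ℝ} (hv : Bdd v) (hK : Summable fun n => |K n|) :
    Summable fun n => v n * K n := by
  obtain ⟨B, hB⟩ := hv
  refine .of_norm_bounded (hK.mul_left B) fun n => ?_
  rw [Real.norm_eq_abs, abs_mul]
  exact mul_le_mul_of_nonneg_right (hB n) (abs_nonneg _)

lemma tsum_fsR_mul (f : ℤ[X]) {y K : ℤ → ℝ} (hy : Bdd y) (hK : Summable fun n => |K n|) :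
    ∑' n, fsR f y n * K n =
      ∑' i, y i * ∑ j ∈ Finset.range (f.natDegree + 1), (f.coeff j : ℝ) * K (i - j) := by
  have hbdd (j : ℕ) : Bdd fun n => y (n + j) := hy.imp fun _ hB n => hB _
  have hsum (j : ℕ) : Summable fun n => y (n + j) * K n := summable_mul_of_bdd (hbdd j) hK
  have hsum' (j : ℕ) : Summable fun i => y i * K (i - j) := by
    simpa [Function.comp_def] using (Equiv.subRight (j : ℤ)).summable_iff.2 (hsum j)
  calc ∑' n, fsR f y n * K n
      = ∑' n, ∑ j ∈ Finset.range (f.natDegree + 1), (f.coeff j : ℝ) * (y (n + j) * K n) := by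
        simp only [fsR, Finset.sum_mul, mul_assoc]
    _ = ∑ j ∈ Finset.range (f.natDegree + 1), (f.coeff j : ℝ) * ∑' n, y (n + j) * K n := by
        rw [Summable.tsum_finsetSum fun j _ => (hsum j).mul_left _]
        simp only [tsum_mul_left]
    _ = ∑ j ∈ Finset.range (f.natDegree + 1), (f.coeff j : ℝ) * ∑' i, y i * K (i - j) := by
        refine Finset.sum_congr rfl fun j _ => congrArg _ ?_
        rw [← (Equiv.addRight (j : ℤ)).tsum_eq fun i => y i * K (i - j)]
        simp
    _ = ∑' i, y i * ∑ j ∈ Finset.range (f.natDegree + 1), (f.coeff j : ℝ) * K (i - j) := by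
        simp only [Finset.mul_sum, mul_left_comm (y _)]
        rw [Summable.tsum_finsetSum fun j _ => (hsum' j).mul_left _]
        simp only [tsum_mul_left]

namespace IsHomoclinicTriple

variable (h : IsHomoclinicTriple f wp wm w0)
include h

lemma sum_coeff_mul_xiKernel (k i : ℤ) :
    ∑ j ∈ Finset.range (f.natDegree + 1), (f.coeff j : ℝ) * xiKernel wp wm k (i - j) =
      (if i = k then 1 else 0) + kernelDefect f w0 i k := by
  have hdelta : (if i = k then (1 : ℝ) else 0) = fsR f wp (k - i) := by
    simp only [h.plus.2.1, vDelta, sub_eq_zero, eq_comm]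
  rw [hdelta, fsR, kernelDefect_apply, Finset.sum_filter, ← Finset.sum_add_distrib]
  refine Finset.sum_congr rfl fun j _ => ?_
  rw [xiKernel, h.central, show k - (i - (j : ℤ)) = k - i + j by ring,
    show k + ((j : ℤ) - i) = k - i + j by ring]
  simp only [sub_nonneg]
  split_ifs <;> ring

lemma xiStar_eq_add_centralDefect {y : ℤ → ℝ} (hy : Bdd y) {v : ℤ → ℤ}
    (hv : ∀ n, (v n : ℝ) = fsR f y n) (k : ℤ) :
    xiStar wp wm v k = y k + centralDefect f w0 y k := by
  have hpoint : HasSum (fun i => y i * if i = k then 1 else 0) (y k) := by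
    convert hasSum_ite_eq k (y k) using 2 with i
    split_ifs with hi <;> simp [hi]
  have hdefect : HasSum (fun i => y i * kernelDefect f w0 i k)
      (∑ i ∈ Finset.range f.natDegree, y i * kernelDefect f w0 i k) := by
    simpa using hasSum_sum_of_ne_finset_zero
      (s := (Finset.range f.natDegree).map Nat.castEmbedding) fun i hi =>
        show y i * kernelDefect f w0 i k = 0 by
          rw [kernelDefect_eq_zero h.mem_centralSubmodule hi,
            BoundedContinuousFunction.coe_zero, Pi.zero_apply, mul_zero]
  calc xiStar wp wm v k = ∑' n, fsR f y n * xiKernel wp wm k n := by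
        simp only [xiStar, xiKernel, hv]
    _ = ∑' i, (y i * (if i = k then 1 else 0) + y i * kernelDefect f w0 i k) := by
        simp only [tsum_fsR_mul f hy (h.summable_abs_xiKernel k), h.sum_coeff_mul_xiKernel, mul_add]
    _ = y k + ∑ i ∈ Finset.range f.natDegree, y i * kernelDefect f w0 i k :=
        (hpoint.add hdefect).tsum_eq
    _ = y k + centralDefect f w0 y k := by
        simp [centralDefect, BoundedContinuousFunction.sum_apply]

lemma xiStar_shiftZseq {v : ℤ → ℤ} (hv : Bdd fun n => (v n : ℝ)) (k : ℤ) :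
    xiStar wp wm (shiftZseq v) k = xiStar wp wm v (k + 1) - v 0 * w0 (k + 1) := by
  have hsum : HasSum (fun n => (v n : ℝ) * xiKernel wp wm (k + 1) n) (xiStar wp wm v (k + 1)) :=
    (summable_mul_of_bdd hv (h.summable_abs_xiKernel (k + 1))).hasSum
  have hzero : HasSum (fun n : ℤ => if n = 0 then (v 0 : ℝ) * w0 (k + 1) else 0)
      ((v 0 : ℝ) * w0 (k + 1)) := hasSum_ite_eq _ _
  refine (((Equiv.addRight (1 : ℤ)).hasSum_iff.2 (hsum.sub hzero)).congr_fun fun n => ?_).tsum_eq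
  -- The coordinate `v_0` moves from the nonnegative to the negative side.
  simp only [shiftZseq, xiKernel, Function.comp_apply, Equiv.coe_addRight, add_sub_add_right_eq_sub]
  rcases lt_trichotomy n (-1) with hn | rfl | hn
  · rw [if_neg (by omega), if_neg (by omega), if_neg (by omega), sub_zero]
  · simp [h.central]
    ring
  · rw [if_pos (by omega), if_pos (by omega), if_neg (by omega), sub_zero]

lemma zetaMap_tauMap {p : (ℤ → ℤ) × (ℤ →ᵇ ℝ)} (hp : Bdd fun n => (p.1 n : ℝ)) :
    zetaMap wp wm (tauMap w0 p) = shiftT (zetaMap wp wm p) := by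
  ext k
  simp only [zetaMap, tauMap, shiftT, h.xiStar_shiftZseq hp]
  congr 1
  simp

end IsHomoclinicTriple

end Central

section CanonicalCover

variable {f : ℤ[X]}

lemma continuous_fsR (f : ℤ[X]) : Continuous (fsR f) := by
  unfold fsR
  fun_prop

lemma continuous_shiftIterR (k : ℤ) : Continuous (shiftIterR k) := by
  unfold shiftIterR
  fun_prop

/-- The sum of the absolute values of the coefficients of `f`. -/
def coeffNorm (f : ℤ[X]) : ℝ := ∑ k ∈ Finset.range (f.natDegree + 1), |(f.coeff k : ℝ)|

lemma coeffNorm_nonneg (f : ℤ[X]) : 0 ≤ coeffNorm f := Finset.sum_nonneg fun _ _ => abs_nonneg _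

lemma abs_fsR_le {w : ℤ → ℝ} {B : ℝ} {n : ℤ} (h : ∀ k ≤ f.natDegree, |w (n + (k : ℤ))| ≤ B) :
    |fsR f w n| ≤ coeffNorm f * B := by
  rw [fsR, coeffNorm, Finset.sum_mul]
  refine (Finset.abs_sum_le_sum_abs _ _).trans (Finset.sum_le_sum fun k hk => ?_)
  rw [abs_mul]
  exact mul_le_mul_of_nonneg_left (h k (Nat.lt_succ_iff.1 (Finset.mem_range.1 hk))) (abs_nonneg _)

lemma closure_YfSet_subset (f : ℤ[X]) :
    closure (YfSet f) ⊆ {y | ∀ n, y n ∈ Set.Icc (0 : ℝ) 1} ∩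
      {y | ∀ n, fsR f y n ∈ Set.range ((↑) : ℤ → ℝ)} := by
  refine closure_minimal (fun y hy => ⟨fun n => Set.Ico_subset_Icc_self (hy.2 n), fun n =>
    (hy.1.2 n).imp fun _ => Eq.symm⟩) (IsClosed.inter ?_ ?_)
  · simp only [Set.ofPred_forall]
    exact isClosed_iInter fun n => isClosed_Icc.preimage (continuous_apply n)
  · simp only [Set.ofPred_forall]
    exact isClosed_iInter fun n => Int.isClosedEmbedding_coe_real.isClosed_range.preimage
      ((continuous_apply n).comp (continuous_fsR f))

lemma isCompact_closure_YfSet (f : ℤ[X]) : IsCompact (closure (YfSet f)) := by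
  have hcube : IsCompact (Set.univ.pi fun _ : ℤ => Set.Icc (0 : ℝ) 1) :=
    isCompact_univ_pi fun _ => isCompact_Icc
  exact hcube.of_isClosed_subset isClosed_closure fun y hy n _ => (closure_YfSet_subset f hy).1 n

lemma abs_le_one_of_mem_closure_YfSet {y : ℤ → ℝ} (hy : y ∈ closure (YfSet f)) (n : ℤ) :
    |y n| ≤ 1 := by
  obtain ⟨h0, h1⟩ := (closure_YfSet_subset f hy).1 n
  rwa [abs_of_nonneg h0]

lemma shiftIterR_mem_YfSet {y : ℤ → ℝ} (k : ℤ) (hy : y ∈ YfSet f) : shiftIterR k y ∈ YfSet f := by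
  refine ⟨⟨hy.1.1.imp fun B hB n => hB _, fun n => ?_⟩, fun n => hy.2 _⟩
  rw [fsR_shiftIterR]
  exact hy.1.2 _

lemma shiftIterR_mem_closure_YfSet {y : ℤ → ℝ} (k : ℤ) (hy : y ∈ closure (YfSet f)) :
    shiftIterR k y ∈ closure (YfSet f) :=
  map_mem_closure (continuous_shiftIterR k) hy fun _ => shiftIterR_mem_YfSet k

lemma shiftIterR_image_closure_YfSet (f : ℤ[X]) (k : ℤ) :
    shiftIterR k '' closure (YfSet f) = closure (YfSet f) := by
  refine (Set.image_subset_iff.2 fun y => shiftIterR_mem_closure_YfSet k).antisymm fun y hy =>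
    ⟨shiftIterR (-k) y, shiftIterR_mem_closure_YfSet (-k) hy, ?_⟩
  ext n
  simp [shiftIterR]

/-- `f(σ̄) y` as an integer sequence; rounding only makes the definition total. -/
def fsRound (f : ℤ[X]) (y : ℤ → ℝ) : ℤ → ℤ := fun n => round (fsR f y n)

lemma coe_fsRound {y : ℤ → ℝ} (hy : y ∈ closure (YfSet f)) (n : ℤ) :
    (fsRound f y n : ℝ) = fsR f y n := by
  obtain ⟨z, hz⟩ := (closure_YfSet_subset f hy).2 n
  rw [fsRound, ← hz, round_intCast]

lemma fsRound_shiftIterR_one (f : ℤ[X]) (y : ℤ → ℝ) :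
    fsRound f (shiftIterR 1 y) = shiftZseq (fsRound f y) := by
  ext n
  simp only [fsRound, fsR_shiftIterR, shiftIterR, shiftZseq]

lemma fsRound_image_closure_YfSet (f : ℤ[X]) : fsRound f '' closure (YfSet f) = ZbarZ f := by
  ext v
  refine exists_congr fun y => and_congr_right fun hy => ?_
  simp only [funext_iff, ← coe_fsRound hy, Int.cast_inj]

lemma abs_le_of_mem_ZbarZ {v : ℤ → ℤ} (hv : v ∈ ZbarZ f) (n : ℤ) : |(v n : ℝ)| ≤ coeffNorm f := by
  obtain ⟨y, hy, rfl⟩ := (fsRound_image_closure_YfSet f).ge hv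
  rw [coe_fsRound hy, ← mul_one (coeffNorm f)]
  exact abs_fsR_le fun k _ => abs_le_one_of_mem_closure_YfSet hy _

lemma bdd_of_mem_ZbarZ {v : ℤ → ℤ} (hv : v ∈ ZbarZ f) : Bdd fun n => (v n : ℝ) :=
  ⟨_, abs_le_of_mem_ZbarZ hv⟩

lemma continuousOn_fsRound (f : ℤ[X]) : ContinuousOn (fsRound f) (closure (YfSet f)) := by
  have hemb := IsClosedEmbedding.piMap fun _ : ℤ => Int.isClosedEmbedding_coe_real
  exact hemb.isInducing.continuousOn_iff.2 <| (continuous_fsR f).continuousOn.congr fun y hy =>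
    funext (coe_fsRound hy)

/-- The lift of `y ∈ Ȳ_f` to a pair `(f(σ̄) y, w) ∈ Z̄_f × W_f^∘` with `ξ̄*(f(σ̄) y) + w = y`. -/
def canonicalLift (f : ℤ[X]) (w0 : ℤ →ᵇ ℝ) (y : ℤ → ℝ) : (ℤ → ℤ) × (ℤ →ᵇ ℝ) :=
  (fsRound f y, -centralDefect f w0 y)

/-- The set of all canonical lifts: a compact `τ`-invariant set lying over `Z̄_f`. -/
def canonicalCover (f : ℤ[X]) (w0 : ℤ →ᵇ ℝ) : Set ((ℤ → ℤ) × (ℤ →ᵇ ℝ)) :=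
  canonicalLift f w0 '' closure (YfSet f)

lemma isCompact_canonicalCover (f : ℤ[X]) (w0 : ℤ →ᵇ ℝ) : IsCompact (canonicalCover f w0) :=
  (isCompact_closure_YfSet f).image_of_continuousOn <|
    (continuousOn_fsRound f).prodMk (continuous_centralDefect f w0).neg.continuousOn

lemma fst_image_canonicalCover (f : ℤ[X]) (w0 : ℤ →ᵇ ℝ) :
    Prod.fst '' canonicalCover f w0 = ZbarZ f := by
  rw [canonicalCover, Set.image_image]
  exact fsRound_image_closure_YfSet f

variable {wp wm : ℤ → ℝ} {w0 : ℤ →ᵇ ℝ}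

lemma canonicalCover_subset (hw0 : w0 ∈ centralSubmodule f) :
    canonicalCover f w0 ⊆ ZbarZ f ×ˢ WfCircB f := by
  rintro _ ⟨y, hy, rfl⟩
  exact ⟨(fsRound_image_closure_YfSet f).le ⟨y, hy, rfl⟩,
    Submodule.neg_mem (centralSubmodule f) (centralDefect_mem hw0 y)⟩

namespace IsHomoclinicTriple

variable (h : IsHomoclinicTriple f wp wm w0)
include h

lemma xiStar_fsRound {y : ℤ → ℝ} (hy : y ∈ closure (YfSet f)) (k : ℤ) :
    xiStar wp wm (fsRound f y) k = y k + centralDefect f w0 y k :=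
  h.xiStar_eq_add_centralDefect ⟨1, abs_le_one_of_mem_closure_YfSet hy⟩ (coe_fsRound hy) k

lemma tauMap_canonicalLift {y : ℤ → ℝ} (hy : y ∈ closure (YfSet f)) :
    tauMap w0 (canonicalLift f w0 y) = canonicalLift f w0 (shiftIterR 1 y) := by
  refine Prod.ext (fsRound_shiftIterR_one f y).symm ?_
  ext k
  have hshift := h.xiStar_shiftZseq
    (bdd_of_mem_ZbarZ ((fsRound_image_closure_YfSet f).le ⟨y, hy, rfl⟩)) k
  rw [← fsRound_shiftIterR_one, h.xiStar_fsRound (shiftIterR_mem_closure_YfSet 1 hy),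
    h.xiStar_fsRound hy, shiftIterR] at hshift
  have hsnd : (tauMap w0 (canonicalLift f w0 y)).2 k =
      -centralDefect f w0 y (k + 1) + fsRound f y 0 * w0 (k + 1) := by
    simp [tauMap, canonicalLift]
  rw [hsnd]
  simp only [canonicalLift, BoundedContinuousFunction.coe_neg, Pi.neg_apply]
  linarith

lemma tauMap_image_canonicalCover : tauMap w0 '' canonicalCover f w0 = canonicalCover f w0 := by
  rw [canonicalCover, Set.image_image, Set.image_congr fun y => h.tauMap_canonicalLift,
    ← Set.image_image, shiftIterR_image_closure_YfSet]

lemma continuousOn_zetaMap {C : Set ((ℤ → ℤ) × (ℤ →ᵇ ℝ))} (hC : ∀ p ∈ C, p.1 ∈ ZbarZ f) :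
    ContinuousOn (zetaMap wp wm) C := by
  refine continuousOn_pi.2 fun k => (AddCircle.continuous_mk' 1).comp_continuousOn ?_
  refine ContinuousOn.add ?_ (by fun_prop)
  refine continuousOn_tsum (u := fun n => coeffNorm f * |xiKernel wp wm k n|)
    (fun n => (show Continuous _ by fun_prop).continuousOn)
    ((h.summable_abs_xiKernel k).mul_left _) fun n p hp => ?_
  rw [Real.norm_eq_abs, abs_mul]
  exact mul_le_mul_of_nonneg_right (abs_le_of_mem_ZbarZ (hC p hp) n) (abs_nonneg _)

end IsHomoclinicTriple

end CanonicalCover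

section IntegralComp

open MeasureTheory

variable {K Y : Type*} [TopologicalSpace K] [CompactSpace K] [MeasurableSpace K] [BorelSpace K]
  [TopologicalSpace Y] [CompactSpace Y] (μ : Measure K) [IsProbabilityMeasure μ]

/-- The functional `F ↦ ∫ F ∘ γ dμ` on `C(Y, ℂ)`, for a continuous map `γ : K → Y`. -/
def integralComp (γ : C(K, Y)) : C(Y, ℂ) →L[ℂ] ℂ :=
  LinearMap.mkContinuous
    { toFun F := ∫ x, F (γ x) ∂μ
      map_add' F F' := integral_add
        ((F.comp γ).continuous.integrable_of_hasCompactSupport (.of_compactSpace _))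
        ((F'.comp γ).continuous.integrable_of_hasCompactSupport (.of_compactSpace _))
      map_smul' c F := integral_const_mul c fun x => F (γ x) }
    1 fun F => by
      simpa using norm_integral_le_of_norm_le_const (μ := μ)
        (Eventually.of_forall fun x => F.norm_coe_le_norm (γ x))

lemma integralComp_apply (γ : C(K, Y)) (F : C(Y, ℂ)) :
    integralComp μ γ F = ∫ x, F (γ x) ∂μ := rfl

lemma lipschitzWith_integralComp (γ : C(K, Y)) : LipschitzWith 1 (integralComp μ γ) :=
  ContinuousLinearMap.lipschitzWith_of_opNorm_le (LinearMap.mkContinuous_norm_le _ zero_le_one _)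

end IntegralComp

section Characters

open MeasureTheory

variable {H : Type*} [AddCommGroup H] [TopologicalSpace H]

/-- The continuous function `x ↦ exp(2πi χ(x))` attached to the character `χ : H → 𝕋`. -/
def circleCharacter (χ : H →ₜ+ Torus) : C(H, ℂ) where
  toFun x := AddCircle.toCircle (χ x)
  continuous_toFun := continuous_subtype_val.comp (AddCircle.continuous_toCircle.comp χ.continuous)

lemma circleCharacter_apply (χ : H →ₜ+ Torus) (x : H) :
    circleCharacter χ x = AddCircle.toCircle (χ x) := rfl

lemma circleCharacter_zero : circleCharacter (0 : H →ₜ+ Torus) = 1 := by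
  ext x
  simp [circleCharacter_apply]

lemma circleCharacter_add (χ ψ : H →ₜ+ Torus) :
    circleCharacter (χ + ψ) = circleCharacter χ * circleCharacter ψ := by
  ext x
  simp [circleCharacter_apply, AddCircle.toCircle_add]

lemma circleCharacter_neg (χ : H →ₜ+ Torus) : circleCharacter (-χ) = star (circleCharacter χ) := by
  ext x
  change (AddCircle.toCircle (-χ x) : ℂ) = star (AddCircle.toCircle (χ x) : ℂ)
  rw [AddCircle.toCircle_neg, Circle.coe_inv_eq_conj]
  rfl

lemma integral_circleCharacter_eq_zero [IsTopologicalAddGroup H] [MeasurableSpace H] [BorelSpace H]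
    (μ : Measure H) [μ.IsAddLeftInvariant] {χ : H →ₜ+ Torus} (hχ : χ ≠ 0) :
    ∫ x, circleCharacter χ x ∂μ = 0 := by
  obtain ⟨a, ha⟩ := DFunLike.ne_iff.1 hχ
  have htranslate :
      ∫ x, circleCharacter χ x ∂μ = circleCharacter χ a * ∫ x, circleCharacter χ x ∂μ := by
    rw [← integral_const_mul, ← integral_add_left_eq_self _ a]
    simp [circleCharacter_apply, AddCircle.toCircle_add]
  have hne : circleCharacter χ a ≠ 1 := fun h => ha <|
    AddCircle.injective_toCircle one_ne_zero ((Circle.coe_eq_one.1 h).trans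
      AddCircle.toCircle_zero.symm)
  by_contra h0
  exact hne (mul_eq_right₀ h0 |>.1 htranslate.symm)

lemma exists_prod_character_ne_zero (hsep : ∀ x : H, x ≠ 0 → ∃ χ : H →ₜ+ Torus, χ x ≠ 0)
    (z : H × H) (hz : z ≠ 0) : ∃ χ : H × H →ₜ+ Torus, χ z ≠ 0 := by
  by_cases h1 : z.1 = 0
  · obtain ⟨χ, hχ⟩ := hsep z.2 fun h2 => hz (Prod.ext h1 h2)
    exact ⟨χ.comp (.snd H H), hχ⟩
  · obtain ⟨χ, hχ⟩ := hsep z.1 h1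
    exact ⟨χ.comp (.fst H H), hχ⟩

variable [CompactSpace H]

lemma dense_span_circleCharacter (hsep : ∀ x : H, x ≠ 0 → ∃ χ : H →ₜ+ Torus, χ x ≠ 0) :
    Dense (Submodule.span ℂ (Set.range (circleCharacter (H := H))) : Set C(H, ℂ)) := by
  let A : StarSubalgebra ℂ C(H, ℂ) :=
    { Algebra.adjoin ℂ (Set.range circleCharacter) with
      star_mem' := by
        change Algebra.adjoin ℂ (Set.range circleCharacter) ≤
          star (Algebra.adjoin ℂ (Set.range circleCharacter))
        refine Algebra.adjoin_le ?_
        rintro - ⟨χ, rfl⟩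
        exact Algebra.subset_adjoin ⟨-χ, circleCharacter_neg χ⟩ }
  have hclosed : (Submonoid.closure (Set.range (circleCharacter (H := H))) : Set C(H, ℂ)) ⊆
      Set.range circleCharacter := fun F hF => by
    refine Submonoid.closure_induction (fun _ => id) ⟨0, circleCharacter_zero⟩ ?_ hF
    rintro - - - - ⟨χ, rfl⟩ ⟨ψ, rfl⟩
    exact ⟨χ + ψ, circleCharacter_add χ ψ⟩
  have hA : (A : Set C(H, ℂ)) =
      Submodule.span ℂ (Set.range (circleCharacter (H := H))) := by
    change ((Algebra.adjoin ℂ (Set.range (circleCharacter (H := H)))).toSubmodule :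
      Set C(H, ℂ)) = _
    rw [Algebra.adjoin_eq_span_of_subset ℂ (hclosed.trans Submodule.subset_span)]
  have hAsep : A.SeparatesPoints := by
    intro x y hxy
    obtain ⟨χ, hχ⟩ := hsep (x - y) (sub_ne_zero.2 hxy)
    refine ⟨_, ⟨circleCharacter χ, Algebra.subset_adjoin ⟨χ, rfl⟩, rfl⟩, fun heq => hχ ?_⟩
    rw [map_sub, sub_eq_zero]
    exact AddCircle.injective_toCircle one_ne_zero (Circle.coe_injective heq)
  rw [← hA, dense_iff_closure_eq, ← StarSubalgebra.topologicalClosure_coe,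
    ContinuousMap.starSubalgebra_topologicalClosure_eq_top_of_separatesPoints A hAsep]
  rfl

variable [IsTopologicalAddGroup H]
  {G ι : Type*} [AddCommGroup G] [TopologicalSpace G] [IsTopologicalAddGroup G] [CompactSpace G]
  {l : Filter ι} {Γ : ι → G →ₜ+ H}

lemma tendsto_integral_comp_of_eventually_comp_ne_zero [MeasurableSpace H] [BorelSpace H]
    [MeasurableSpace G] [BorelSpace G]
    (μ : Measure G) [IsProbabilityMeasure μ] [μ.IsAddLeftInvariant]
    (ν : Measure H) [IsProbabilityMeasure ν] [ν.IsAddLeftInvariant]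
    (hsep : ∀ x : H, x ≠ 0 → ∃ χ : H →ₜ+ Torus, χ x ≠ 0)
    (hΓ : ∀ χ : H →ₜ+ Torus, χ ≠ 0 → ∀ᶠ i in l, χ.comp (Γ i) ≠ 0) (F : C(H, ℂ)) :
    Tendsto (fun i => ∫ x, F (Γ i x) ∂μ) l (𝓝 (∫ y, F y ∂ν)) := by
  have hequi : Equicontinuous fun i => ⇑(integralComp (Y := H) μ (Γ i)) :=
    (LipschitzWith.uniformEquicontinuous _ 1 fun i =>
      lipschitzWith_integralComp μ _).equicontinuous
  have hclosed : IsClosed {F : C(H, ℂ) | Tendsto (fun i => integralComp μ (Γ i) F) l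
      (𝓝 (integralComp ν (ContinuousMap.id H) F))} :=
    hequi.isClosed_setOfPred_tendsto (integralComp ν (ContinuousMap.id H)).continuous
  refine hclosed.closure_subset_iff.2 (fun F hF => ?_) (dense_span_circleCharacter hsep F)
  induction hF using Submodule.span_induction with
  | mem F hF =>
    obtain ⟨χ, rfl⟩ := hF
    rcases eq_or_ne χ 0 with rfl | hχ
    · simp [integralComp_apply, circleCharacter_zero, tendsto_const_nhds]
    · refine tendsto_const_nhds.congr' ?_
      filter_upwards [hΓ χ hχ] with i hi
      exact (integral_circleCharacter_eq_zero ν hχ).trans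
        (integral_circleCharacter_eq_zero μ hi).symm
  | zero => simp [tendsto_const_nhds]
  | add F F' _ _ hF hF' => simpa using Tendsto.add hF hF'
  | smul c F _ hF => simpa using Tendsto.const_smul hF c

lemma eventually_exists_apply_mem_of_eventually_comp_ne_zero [T2Space H]
    (hsep : ∀ x : H, x ≠ 0 → ∃ χ : H →ₜ+ Torus, χ x ≠ 0)
    (hΓ : ∀ χ : H →ₜ+ Torus, χ ≠ 0 → ∀ᶠ i in l, χ.comp (Γ i) ≠ 0)
    {U : Set H} (hU : IsOpen U) (hne : U.Nonempty) : ∀ᶠ i in l, ∃ x, Γ i x ∈ U := by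
  borelize G H
  let μ : Measure G := Measure.addHaarMeasure ⊤
  let ν : Measure H := Measure.addHaarMeasure ⊤
  have : IsProbabilityMeasure μ := ⟨Measure.addHaarMeasure_self⟩
  have : IsProbabilityMeasure ν := ⟨Measure.addHaarMeasure_self⟩
  obtain ⟨a, ha⟩ := hne
  obtain ⟨g, hg0, hg1, hg⟩ := exists_continuous_zero_one_of_isClosed hU.isClosed_compl
    (isClosed_singleton (x := a)) (Set.disjoint_singleton_right.2 fun h => h ha)
  have hpos : 0 < ∫ y, g y ∂ν :=
    g.continuous.integral_pos_of_hasCompactSupport_nonneg_nonzero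
      (HasCompactSupport.of_compactSpace _) (fun y => (hg y).1) (x := a) (by simp [hg1 rfl])
  let g' : C(H, ℂ) := ⟨_, Complex.continuous_ofReal.comp g.continuous⟩
  have hlim := tendsto_integral_comp_of_eventually_comp_ne_zero μ ν hsep hΓ g'
  have hne : ∫ y, g' y ∂ν ≠ 0 :=
    integral_ofReal.trans_ne (Complex.ofReal_ne_zero.2 hpos.ne')
  filter_upwards [hlim.eventually_ne hne] with i hi
  by_contra! hout
  exact hi (integral_eq_zero_of_ae (.of_forall fun x => by simp [g', hg0 (hout x)]))

variable [T2Space H]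

lemma eventually_exists_mem_and_pow_apply_mem {T : AddMonoid.End H} (hT : Continuous T)
    (hTsurj : Function.Surjective T)
    (hTk : ∀ k, 0 < k → Function.Surjective (T ^ k - 1 : AddMonoid.End H))
    (hsep : ∀ x : H, x ≠ 0 → ∃ χ : H →ₜ+ Torus, χ x ≠ 0) {U V : Set H} (hU : IsOpen U)
    (hUne : U.Nonempty) (hV : IsOpen V) (hVne : V.Nonempty) :
    ∀ᶠ n in atTop, ∃ x ∈ U, T^[n] x ∈ V := by
  let Γ (n : ℕ) : H →ₜ+ H × H := .prod (.id H) ⟨T ^ n, hT.iterate n⟩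
  have hΓ_apply (n : ℕ) (x : H) : Γ n x = (x, (T ^ n) x) := rfl
  -- If `χ = (χ₁, χ₂)` dies on the graphs of both `T^n` and `T^(n+k)`, then
  -- `χ₂ ∘ (T^k - 1) ∘ T^n = 0`.
  have hunique (χ : H × H →ₜ+ Torus) {n k : ℕ} (hk : 0 < k) (hn : χ.comp (Γ n) = 0)
      (hnk : χ.comp (Γ (n + k)) = 0) : χ = 0 := by
    replace hn (x : H) : χ (x, (T ^ n) x) = 0 := DFunLike.congr_fun hn x
    replace hnk (x : H) : χ (x, (T ^ (n + k)) x) = 0 := DFunLike.congr_fun hnk x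
    have hsnd (y : H) : χ (0, y) = 0 := by
      obtain ⟨y, rfl⟩ := hTk k hk y
      obtain ⟨y, rfl⟩ := (hTsurj.iterate n) y
      have hdiff : ((0, (T ^ k - 1 : AddMonoid.End H) (T^[n] y)) : H × H) =
          (y, (T ^ (n + k)) y) - (y, (T ^ n) y) := by
        rw [Prod.mk_sub_mk, sub_self, add_comm, pow_add]
        rfl
      rw [hdiff, map_sub, hnk, hn, sub_zero]
    ext z
    have hfst := hn z.1
    have hsplit : z = (z.1, (T ^ n) z.1) + (0, z.2 - (T ^ n) z.1) := by simp
    rw [hsplit, map_add, hfst, hsnd, add_zero]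
    rfl
  have hΓ (χ : H × H →ₜ+ Torus) (hχ : χ ≠ 0) : ∀ᶠ n in atTop, χ.comp (Γ n) ≠ 0 := by
    by_contra hfreq
    obtain ⟨n, hn⟩ := (not_eventually.1 hfreq).exists
    obtain ⟨m, hm, hnm⟩ := frequently_atTop'.1 (not_eventually.1 hfreq) n
    obtain ⟨k, rfl⟩ := Nat.exists_eq_add_of_lt hm
    exact hχ (hunique χ k.succ_pos (not_not.1 hn) (not_not.1 hnm))
  filter_upwards [eventually_exists_apply_mem_of_eventually_comp_ne_zero
    (exists_prod_character_ne_zero hsep) hΓ (hU.prod hV) (hUne.prod hVne)] with n ⟨x, hxU, hxV⟩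
  exact ⟨x, hxU, by simpa [hΓ_apply, AddMonoid.End.coe_pow] using hxV⟩

end Characters

section PeriodDifference

variable {M : Type*} [AddCommGroup M]

lemma exists_forall_sub_eq (x : ℤ → M) : ∃ y : ℤ → M, ∀ n, y (n + 1) - y n = x n := by
  refine ⟨fun
    | (m : ℕ) => ∑ i ∈ Finset.range m, x i
    | Int.negSucc m => -∑ i ∈ Finset.range (m + 1), x (Int.negSucc i), fun n => ?_⟩
  rcases n with m | m | m
  · exact sub_eq_of_eq_add' (Finset.sum_range_succ _ m)
  · simp
  · change -∑ i ∈ Finset.range (m + 1), x (Int.negSucc i) -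
      -∑ i ∈ Finset.range (m + 2), x (Int.negSucc i) = _
    rw [Finset.sum_range_succ _ (m + 1)]
    abel

lemma aeval_shiftEnd_X_pow_sub_one_apply (k : ℕ) (x : ℤ → M) (n : ℤ) :
    aeval (shiftEnd ℤ M ℤ) (X ^ k - 1 : ℤ[X]) x n = x (n + k) - x n := by
  simp

lemma surjective_aeval_shiftEnd_X_pow_sub_one {k : ℕ} (hk : 0 < k) :
    Function.Surjective (aeval (shiftEnd ℤ M ℤ) (X ^ k - 1 : ℤ[X])) := by
  intro x
  choose y hy using fun r : ℤ => exists_forall_sub_eq fun q => x (r + k * q)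
  refine ⟨fun n => y (n % k) (n / k), funext fun n => ?_⟩
  have hk' : (k : ℤ) ≠ 0 := by exact_mod_cast hk.ne'
  rw [aeval_shiftEnd_X_pow_sub_one_apply, Int.add_emod_right,
    Int.add_ediv_of_dvd_right dvd_rfl, Int.ediv_self hk', hy, Int.emod_add_mul_ediv]

lemma exists_zsmul_eq_of_aeval_X_pow_sub_one_eq_zero [DivisibleBy M ℤ] {r : ℤ} (hr : r ≠ 0) (k : ℕ)
    {z : ℤ → M} (hz : aeval (shiftEnd ℤ M ℤ) (X ^ k - 1 : ℤ[X]) z = 0) :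
    ∃ z', aeval (shiftEnd ℤ M ℤ) (X ^ k - 1 : ℤ[X]) z' = 0 ∧ r • z' = z := by
  refine ⟨fun n => DivisibleBy.div (z n) r, funext fun n => ?_,
    funext fun n => DivisibleBy.div_cancel (z n) hr⟩
  have hn := congrFun hz n
  rw [aeval_shiftEnd_X_pow_sub_one_apply, Pi.zero_apply, sub_eq_zero] at hn
  rw [aeval_shiftEnd_X_pow_sub_one_apply, hn, sub_self, Pi.zero_apply]

lemma exists_aeval_eq_of_mul_add_mul_eq_C {R : Type*} [CommRing R] [Module R M] {T : Module.End R M}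
    {f g a b : R[X]} {r : R} (hbezout : f * a + g * b = Polynomial.C r)
    (hsurj : Function.Surjective (aeval T g))
    (hdiv : ∀ z, aeval T g z = 0 → ∃ z', aeval T g z' = 0 ∧ r • z' = z)
    {x : M} (hx : aeval T f x = 0) : ∃ y, aeval T f y = 0 ∧ aeval T g y = x := by
  have hmul (p q : R[X]) (z : M) : aeval T p (aeval T q z) = aeval T (p * q) z := by
    rw [map_mul, Module.End.mul_apply]
  obtain ⟨y, hy⟩ := hsurj x
  obtain ⟨z, hz, hzy⟩ := hdiv (aeval T f y) (by rw [hmul, mul_comm, ← hmul, hy, hx])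
  -- The defect `f(T) y` lies in `ker g(T)`, where `f(T) a(T)` is multiplication by `r`.
  have hfaz : aeval T f (aeval T a z) = aeval T f y := by
    have h := congrArg (fun p => aeval T p z) hbezout
    simp only [map_add, LinearMap.add_apply, aeval_C, Module.algebraMap_end_apply, hzy] at h
    rwa [mul_comm g, ← hmul b, hz, map_zero, add_zero, ← hmul] at h
  refine ⟨y - aeval T a z, by rw [map_sub, hfaz, sub_self], ?_⟩
  rw [map_sub, hy, hmul, mul_comm, ← hmul, hz, map_zero, sub_zero]

end PeriodDifference

lemma Noncyclotomic.exists_mul_add_mul_eq_C {f : ℤ[X]} (hf : Noncyclotomic f) {k : ℕ} (hk : 0 < k) :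
    ∃ a b : ℤ[X], ∃ r : ℤ, r ≠ 0 ∧ f * a + (X ^ k - 1) * b = Polynomial.C r := by
  let φ := algebraMap ℤ ℂ
  have hdeg (p : ℤ[X]) : (p.map φ).natDegree = p.natDegree :=
    natDegree_map_eq_of_injective φ.injective_int p
  have hcoprime : IsCoprime (f.map φ) ((X ^ k - 1 : ℤ[X]).map φ) := by
    refine (isCoprime_iff_aeval_ne_zero_of_isAlgClosed ℂ ℂ _ _).2 fun θ => ?_
    simp only [aeval_map_algebraMap, φ]
    refine (em (aeval θ f = 0)).symm.imp_right fun hθ => ?_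
    simpa [sub_ne_zero] using hf θ hθ k hk
  have hres : φ (f.resultant (X ^ k - 1)) ≠ 0 := by
    rw [← resultant_map_map, ← hdeg f, ← hdeg (X ^ k - 1)]
    exact resultant_ne_zero _ _ hcoprime
  have hXdeg : (X ^ k - 1 : ℤ[X]).natDegree = k := natDegree_X_pow_sub_C (r := 1)
  obtain ⟨a, b, -, -, hab⟩ := exists_mul_add_mul_eq_C_resultant f (X ^ k - 1) le_rfl le_rfl
    (Or.inr (by rw [hXdeg]; exact hk.ne'))
  exact ⟨a, b, _, fun h => hres (by rw [h, map_zero]), hab⟩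

section Xf

variable {f : ℤ[X]}

/-- `X_f` as a subgroup of `𝕋^ℤ`. -/
def XfGroup (f : ℤ[X]) : AddSubgroup (ℤ → Torus) :=
  (LinearMap.ker (aeval (shiftEnd ℤ Torus ℤ) f)).toAddSubgroup

lemma mem_Xf_iff_aeval {x : ℤ → Torus} : x ∈ Xf f ↔ aeval (shiftEnd ℤ Torus ℤ) f x = 0 := by
  rw [← fsT_eq_aeval, funext_iff]
  rfl

lemma mem_XfGroup {x : ℤ → Torus} : x ∈ XfGroup f ↔ x ∈ Xf f := mem_Xf_iff_aeval.symm

lemma isClosed_Xf (f : ℤ[X]) : IsClosed (Xf f) := by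
  simp only [Xf, Set.ofPred_forall]
  refine isClosed_iInter fun n => isClosed_singleton.preimage (?_ : Continuous fun x => fsT f x n)
  unfold fsT
  fun_prop

lemma isCompact_Xf (f : ℤ[X]) : IsCompact (Xf f) := (isClosed_Xf f).isCompact

instance compactSpace_XfGroup (f : ℤ[X]) : CompactSpace (XfGroup f) := by
  refine isCompact_iff_compactSpace.1 (?_ : IsCompact (XfGroup f : Set (ℤ → Torus)))
  rw [show (XfGroup f : Set (ℤ → Torus)) = Xf f from Set.ext fun x => mem_XfGroup]
  exact isCompact_Xf f

lemma exists_XfGroup_character_ne_zero (x : XfGroup f) (hx : x ≠ 0) :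
    ∃ χ : XfGroup f →ₜ+ Torus, χ x ≠ 0 := by
  obtain ⟨n, hn⟩ := Function.ne_iff.1 fun h : (x : ℤ → Torus) = 0 => hx (Subtype.ext h)
  exact ⟨⟨(Pi.evalAddMonoidHom _ n).comp (XfGroup f).subtype,
    (continuous_apply n).comp continuous_subtype_val⟩, hn⟩

lemma continuous_shiftT : Continuous shiftT := by
  unfold shiftT
  fun_prop

lemma shiftT_iterate_apply (n : ℕ) (x : ℤ → Torus) (k : ℤ) : shiftT^[n] x k = x (k + n) := by
  rw [← shiftEnd_pow_apply (R := ℤ) n x k, Module.End.pow_apply]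
  rfl

lemma shiftT_mem_Xf {x : ℤ → Torus} (hx : x ∈ Xf f) : shiftT x ∈ Xf f := fun n => by
  rw [← hx (n + 1)]
  simp only [fsT, shiftT, add_right_comm]

/-- `α_f` as an endomorphism of the group `X_f`. -/
def alphaHom (f : ℤ[X]) : AddMonoid.End (XfGroup f) where
  toFun x := ⟨shiftT x, mem_XfGroup.2 (shiftT_mem_Xf (mem_XfGroup.1 x.2))⟩
  map_zero' := rfl
  map_add' _ _ := rfl

lemma continuous_alphaHom (f : ℤ[X]) : Continuous (alphaHom f) :=
  (continuous_shiftT.comp continuous_subtype_val).subtype_mk _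

lemma coe_alphaHom_iterate (n : ℕ) (x : XfGroup f) :
    ((alphaHom f)^[n] x : ℤ → Torus) = shiftT^[n] x :=
  Function.Semiconj.iterate_right (f := Subtype.val) (fun _ => rfl) n x

lemma alphaHom_surjective (f : ℤ[X]) : Function.Surjective (alphaHom f) := fun x => by
  refine ⟨⟨fun n => x.1 (n - 1), mem_XfGroup.2 fun n => ?_⟩, Subtype.ext (funext fun n => ?_)⟩
  · rw [← mem_XfGroup.1 x.2 (n - 1)]
    simp only [fsT, sub_add_eq_add_sub]
  · exact congrArg x.1 (add_sub_cancel_right n 1)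

lemma Noncyclotomic.exists_mem_Xf_forall_sub_eq (hf : Noncyclotomic f) {k : ℕ} (hk : 0 < k)
    {x : ℤ → Torus} (hx : x ∈ Xf f) : ∃ y ∈ Xf f, ∀ n, y (n + k) - y n = x n := by
  obtain ⟨a, b, r, hr, hbezout⟩ := hf.exists_mul_add_mul_eq_C hk
  obtain ⟨y, hy, hyx⟩ := exists_aeval_eq_of_mul_add_mul_eq_C hbezout
    (surjective_aeval_shiftEnd_X_pow_sub_one (M := Torus) hk)
    (fun _ => exists_zsmul_eq_of_aeval_X_pow_sub_one_eq_zero hr k) (mem_Xf_iff_aeval.1 hx)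
  exact ⟨y, mem_Xf_iff_aeval.2 hy, fun n => by rw [← hyx, aeval_shiftEnd_X_pow_sub_one_apply]⟩

lemma alphaHom_pow_sub_one_surjective (hf : Noncyclotomic f) {k : ℕ} (hk : 0 < k) :
    Function.Surjective (alphaHom f ^ k - 1 : AddMonoid.End (XfGroup f)) := fun x => by
  obtain ⟨y, hy, hyx⟩ := hf.exists_mem_Xf_forall_sub_eq hk (mem_XfGroup.1 x.2)
  let z : XfGroup f := ⟨y, mem_XfGroup.2 hy⟩
  refine ⟨z, Subtype.ext (funext fun n => ?_)⟩
  calc ((alphaHom f ^ k - 1 : AddMonoid.End (XfGroup f)) z : ℤ → Torus) n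
      = ((alphaHom f)^[k] z : ℤ → Torus) n - y n := by
        rw [← AddMonoid.End.coe_pow]; rfl
    _ = y (n + k) - y n := by rw [coe_alphaHom_iterate, shiftT_iterate_apply]
    _ = (x : ℤ → Torus) n := hyx n

lemma Noncyclotomic.eventually_exists_alphaHom_iterate_mem (hf : Noncyclotomic f)
    {U V : Set (XfGroup f)} (hU : IsOpen U) (hUne : U.Nonempty) (hV : IsOpen V)
    (hVne : V.Nonempty) : ∀ᶠ n in atTop, ∃ x ∈ U, (alphaHom f)^[n] x ∈ V :=
  eventually_exists_mem_and_pow_apply_mem (continuous_alphaHom f) (alphaHom_surjective f)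
    (fun _ => alphaHom_pow_sub_one_surjective hf) exists_XfGroup_character_ne_zero hU hUne hV hVne

end Xf

section CentralRecurrence

variable {f : ℤ[X]}

lemma eq_zero_of_fsR_eq_zero_of_initial (hf : f ≠ 0) {d : ℤ → ℝ} {a : ℤ} {N : ℕ}
    (hd : ∀ n < N, fsR f d (a + n) = 0) (hinit : ∀ i < f.natDegree, d (a + i) = 0) :
    ∀ i < N + f.natDegree, d (a + i) = 0 := by
  induction N with
  | zero => simpa using hinit
  | succ N ih =>
    have ih := ih fun n hn => hd n (by omega)
    intro i hi
    rcases Nat.lt_or_ge i (N + f.natDegree) with hlt | hge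
    · exact ih i hlt
    · have htop := hd N N.lt_succ_self
      rw [fsR, Finset.sum_range_succ, Finset.sum_eq_zero fun k hk => ?_, zero_add] at htop
      · have hlead : (f.coeff f.natDegree : ℝ) ≠ 0 := by
          exact_mod_cast leadingCoeff_ne_zero.2 hf
        rw [show (i : ℤ) = N + f.natDegree by omega, ← add_assoc]
        exact (mul_eq_zero.1 htop).resolve_left hlead
      · rw [add_assoc, ← Nat.cast_add, ih _ (by have := Finset.mem_range.1 hk; omega), mul_zero]

lemma eq_zero_of_fsR_eq_zero (hf : f ≠ 0) {d : ℤ → ℝ} (hd : ∀ n, fsR f d n = 0)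
    (hinit : ∀ i < f.natDegree, d i = 0) : d = 0 := by
  funext n
  rcases le_or_gt 0 n with hn | hn
  · lift n to ℕ using hn
    simpa using eq_zero_of_fsR_eq_zero_of_initial hf (a := 0) (N := n + 1) (fun i _ => hd _)
      (by simpa using hinit) n (by omega)
  · have hback := eq_zero_of_fsR_eq_zero_of_initial (f := f.reverse) (by simpa using hf)
      (d := fun i => d (-i)) (a := 1 - f.natDegree) (N := f.natDegree + n.natAbs)
      (fun i _ => by rw [fsR_reverse_comp_neg, hd]) (fun i hi => ?_)
      (f.natDegree + n.natAbs - 1) (by omega)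
    · simpa only [show -(1 - (f.natDegree : ℤ) + (f.natDegree + n.natAbs - 1 : ℕ)) = n by omega,
        Pi.zero_apply] using hback
    · have hle := f.reverse_natDegree_le
      simpa only [show -(1 - (f.natDegree : ℤ) + i) = (f.natDegree - 1 - i : ℕ) by omega]
        using hinit (f.natDegree - 1 - i) (by omega)

lemma finiteDimensional_centralSubmodule (hf : f ≠ 0) :
    FiniteDimensional ℝ (centralSubmodule f) := by
  let initial : centralSubmodule f →ₗ[ℝ] (Fin f.natDegree → ℝ) :=
    { toFun := fun w i => (w : ℤ →ᵇ ℝ) (i : ℕ)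
      map_add' := fun _ _ => rfl
      map_smul' := fun _ _ => rfl }
  refine FiniteDimensional.of_injective initial fun w w' hww => Subtype.ext <|
    DFunLike.coe_injective <| sub_eq_zero.1 ?_
  exact eq_zero_of_fsR_eq_zero hf (w - w').2 fun i hi => sub_eq_zero.2 (congrFun hww ⟨i, hi⟩)

lemma frequently_norm_iterate_sub_le {E : Type*} [NormedAddCommGroup E] [NormedSpace ℝ E]
    [FiniteDimensional ℝ E] (T : E →ₗᵢ[ℝ] E) {ε : ℝ} (hε : 0 < ε) :
    ∃ᶠ n : ℕ in atTop, ∀ x, ‖T^[n] x - x‖ ≤ ε * ‖x‖ := by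
  have : ProperSpace (E →L[ℝ] E) := FiniteDimensional.proper ℝ _
  obtain ⟨L, -, φ, hφ, hL⟩ := (isCompact_closedBall (0 : E →L[ℝ] E) 1).tendsto_subseq
    (x := fun n : ℕ => (T ^ n).toContinuousLinearMap) fun n => by
      rw [mem_closedBall_zero_iff]
      exact (T ^ n).norm_toContinuousLinearMap_le
  obtain ⟨M, hM⟩ := Metric.cauchySeq_iff.1 hL.cauchySeq ε hε
  refine frequently_atTop.2 fun N => ⟨φ (M + N) - φ M, ?_, fun x => ?_⟩
  · have := hφ.add_le_nat N M
    rw [add_comm M N]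
    omega
  · have hclose := ContinuousLinearMap.le_of_opNorm_le _
      ((dist_eq_norm _ _).symm.trans_lt (hM (M + N) (M.le_add_right N) M le_rfl)).le x
    obtain ⟨k, hk⟩ := Nat.exists_eq_add_of_le (hφ.monotone (M.le_add_right N))
    calc ‖T^[φ (M + N) - φ M] x - x‖ = ‖(T ^ φ M) (T^[k] x - x)‖ := by
          rw [LinearIsometry.norm_map, hk, Nat.add_sub_cancel_left]
      _ = ‖(T ^ φ (M + N)) x - (T ^ φ M) x‖ := by
          rw [map_sub, hk, pow_add, LinearIsometry.coe_mul, Function.comp_apply,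
            LinearIsometry.coe_pow T k]
      _ ≤ ε * ‖x‖ := hclose

lemma norm_translB (k : ℤ) (w : ℤ →ᵇ ℝ) : ‖translB k w‖ = ‖w‖ :=
  le_antisymm ((BoundedContinuousFunction.norm_le (norm_nonneg _)).2 fun _ => w.norm_coe_le_norm _)
    ((BoundedContinuousFunction.norm_le (norm_nonneg _)).2 fun n => by
      simpa using (translB k w).norm_coe_le_norm (n - k))

/-- The shift on `W_f^∘` as a linear isometry. -/
def centralShift (f : ℤ[X]) : centralSubmodule f →ₗᵢ[ℝ] centralSubmodule f where
  toFun w := ⟨translB 1 w, translB_mem_centralSubmodule 1 w.2⟩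
  map_add' _ _ := rfl
  map_smul' _ _ := rfl
  norm_map' w := norm_translB 1 w

lemma coe_centralShift_iterate (n : ℕ) (w : centralSubmodule f) :
    ((centralShift f)^[n] w : ℤ →ᵇ ℝ) = translB n w := by
  ext k
  induction n generalizing k with
  | zero => simp
  | succ n ih =>
    rw [Function.iterate_succ_apply']
    refine (ih (k + 1)).trans ?_
    simp [add_assoc, add_comm (1 : ℤ)]

lemma frequently_norm_translB_sub_le (hf : f ≠ 0) {ε : ℝ} (hε : 0 < ε) :
    ∃ᶠ n : ℕ in atTop, ∀ w ∈ centralSubmodule f, ‖translB n w - w‖ ≤ ε * ‖w‖ := by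
  have := finiteDimensional_centralSubmodule hf
  refine (frequently_norm_iterate_sub_le (E := centralSubmodule f)
    (centralShift f) hε).mono fun n hn w hw => ?_
  rw [← coe_centralShift_iterate n ⟨w, hw⟩]
  exact hn ⟨w, hw⟩

end CentralRecurrence

section DenseOrbit

lemma exists_forall_exists_iterate_mem {X ι : Type*} [TopologicalSpace X] [BaireSpace X]
    [SecondCountableTopology X] [Nonempty X] [Countable ι] {T : X → X} (hT : Continuous T)
    (hmix : ∀ U V : Set X, IsOpen U → U.Nonempty → IsOpen V → V.Nonempty →
      ∀ᶠ n in atTop, ∃ x ∈ U, T^[n] x ∈ V)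
    {R : ι → ℕ → Prop} (hR : ∀ j, ∃ᶠ n in atTop, R j n) :
    ∃ x, ∀ j, ∀ U : Set X, IsOpen U → U.Nonempty → ∃ n, R j n ∧ T^[n] x ∈ U := by
  let basis := TopologicalSpace.countableBasis X
  let visits (q : basis × ι) : Set X := ⋃ (n) (_ : R q.2 n), T^[n] ⁻¹' q.1
  have hopen (q : basis × ι) : IsOpen (visits q) := isOpen_biUnion fun n _ =>
    (TopologicalSpace.isOpen_of_mem_countableBasis q.1.2).preimage (hT.iterate n)
  have hdense (q : basis × ι) : Dense (visits q) := dense_iff_inter_open.2 fun U hU hUne => by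
    obtain ⟨n, hn, x, hxU, hxV⟩ := ((hR q.2).and_eventually <| hmix U q.1 hU hUne
      (TopologicalSpace.isOpen_of_mem_countableBasis q.1.2)
      (TopologicalSpace.nonempty_of_mem_countableBasis q.1.2)).exists
    exact ⟨x, hxU, Set.mem_biUnion (s := {n | R q.2 n}) hn hxV⟩
  have : Countable basis := (TopologicalSpace.countable_countableBasis X).to_subtype
  obtain ⟨x, hx⟩ := (dense_iInter_of_isOpen hopen hdense).nonempty
  refine ⟨x, fun j U hU ⟨a, ha⟩ => ?_⟩
  obtain ⟨V, hV, -, hVU⟩ :=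
    (TopologicalSpace.isBasis_countableBasis X).exists_subset_of_mem_open ha hU
  obtain ⟨n, hn, hnx⟩ := Set.mem_iUnion₂.1 (Set.mem_iInter.1 hx (⟨V, hV⟩, j))
  exact ⟨n, hn, hVU hnx⟩

lemma Noncyclotomic.exists_mem_closure_orbit {f : ℤ[X]} (hnc : Noncyclotomic f) (hf : f ≠ 0) :
    ∃ x₀ : XfGroup f, ∀ x : XfGroup f, ∀ w ∈ centralSubmodule f,
      (x, w) ∈ closure (Set.range fun n : ℕ => ((alphaHom f)^[n] x₀, translB n w)) := by
  have : SecondCountableTopology (XfGroup f) :=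
    TopologicalSpace.Subtype.secondCountableTopology (XfGroup f : Set (ℤ → Torus))
  obtain ⟨x₀, hx₀⟩ := exists_forall_exists_iterate_mem (continuous_alphaHom f)
    (fun U V hU hUne hV hVne => hnc.eventually_exists_alphaHom_iterate_mem hU hUne hV hVne)
    (R := fun (j : ℕ) (n : ℕ) => ∀ w ∈ centralSubmodule f,
      ‖translB n w - w‖ ≤ 1 / ((j : ℝ) + 1) * ‖w‖)
    fun j => frequently_norm_translB_sub_le hf (by positivity)
  refine ⟨x₀, fun x w hw => mem_closure_iff_nhds.2 fun s hs => ?_⟩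
  obtain ⟨U, V, hU, hxU, hV, hwV, hUV⟩ := mem_nhds_prod_iff'.1 hs
  obtain ⟨ε, hε, hεV⟩ := Metric.isOpen_iff.1 hV w hwV
  obtain ⟨j, hj⟩ := exists_nat_one_div_lt (div_pos hε (show 0 < ‖w‖ + 1 by positivity))
  obtain ⟨n, hn, hnU⟩ := hx₀ j U hU ⟨x, hxU⟩
  refine ⟨_, hUV ⟨hnU, hεV ?_⟩, n, rfl⟩
  rw [mem_ball_iff_norm]
  calc ‖translB n w - w‖ ≤ 1 / ((j : ℝ) + 1) * ‖w‖ := hn w hw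
    _ ≤ ε / (‖w‖ + 1) * ‖w‖ := by gcongr
    _ < ε := by
      rw [div_mul_eq_mul_div, div_lt_iff₀ (by positivity)]
      linarith

end DenseOrbit

section Image

variable {f : ℤ[X]} {wp wm : ℤ → ℝ} {w0 : ℤ →ᵇ ℝ}

lemma coe_mem_Xf_iff {y : ℤ → ℝ} :
    (fun n => (y n : Torus)) ∈ Xf f ↔ ∀ n, ∃ z : ℤ, fsR f y n = z := by
  refine forall_congr' fun n => ?_
  have hcoe : fsT f (fun k => (y k : Torus)) n = (fsR f y n : ℝ) := by
    simp [fsT, fsR, ← zsmul_eq_mul]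
  rw [hcoe, AddCircle.coe_eq_zero_iff]
  simp only [zsmul_eq_mul, mul_one, eq_comm]

lemma exists_mem_YfSet_coe_eq {x : ℤ → Torus} (hx : x ∈ Xf f) :
    ∃ y ∈ YfSet f, (fun n => (y n : Torus)) = x := by
  let y : ℤ → ℝ := fun n => AddCircle.equivIco 1 0 (x n)
  have hIco (n : ℤ) : y n ∈ Set.Ico (0 : ℝ) 1 := by
    simpa using (AddCircle.equivIco (1 : ℝ) 0 (x n)).2
  have hyx : (fun n => (y n : Torus)) = x :=
    funext fun n => (AddCircle.equivIco 1 0).symm_apply_apply (x n)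
  exact ⟨y, ⟨⟨⟨1, fun n => by rw [abs_of_nonneg (hIco n).1]; exact (hIco n).2.le⟩,
    coe_mem_Xf_iff.1 (hyx ▸ hx)⟩, hIco⟩, hyx⟩

/-- Coordinatewise reduction `ρ` mod one, on bounded sequences. -/
def rhoB (w : ℤ →ᵇ ℝ) : ℤ → Torus := fun n => (w n : Torus)

lemma continuous_rhoB : Continuous rhoB := continuous_pi fun n =>
  (AddCircle.continuous_mk' 1).comp (continuous_eval_const n)

lemma add_rhoB_mem_of_mem_closure {K : Set (ℤ → Torus)} (hK : IsClosed K)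
    (hinv : Set.MapsTo shiftT K K) {x₀ x : XfGroup f} {w : ℤ →ᵇ ℝ}
    (hx₀ : (x₀ : ℤ → Torus) + rhoB w ∈ K)
    (hx : (x, w) ∈ closure (Set.range fun n : ℕ => ((alphaHom f)^[n] x₀, translB n w))) :
    (x : ℤ → Torus) + rhoB w ∈ K := by
  have hcont : Continuous fun q : XfGroup f × (ℤ →ᵇ ℝ) => (q.1 : ℤ → Torus) + rhoB q.2 :=
    (continuous_subtype_val.comp continuous_fst).add (continuous_rhoB.comp continuous_snd)
  rw [← hK.closure_eq]
  refine map_mem_closure (f := fun q : XfGroup f × (ℤ →ᵇ ℝ) => (q.1 : ℤ → Torus) + rhoB q.2)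
    hcont hx ?_
  rintro _ ⟨n, rfl⟩
  convert hinv.iterate n hx₀ using 1
  funext k
  simp [coe_alphaHom_iterate, shiftT_iterate_apply, rhoB]

namespace IsHomoclinicTriple

variable (h : IsHomoclinicTriple f wp wm w0)
include h

lemma zetaMap_fsRound {y : ℤ → ℝ} (hy : y ∈ closure (YfSet f)) (w : ℤ →ᵇ ℝ) :
    zetaMap wp wm (fsRound f y, w) =
      (fun n => (y n : Torus)) + rhoB (centralDefect f w0 y + w) := by
  funext k
  simp [zetaMap, h.xiStar_fsRound hy, rhoB, add_assoc]

lemma zetaMap_mem_Xf {p : (ℤ → ℤ) × (ℤ →ᵇ ℝ)} (hp : p ∈ ZbarZ f ×ˢ WfCircB f) :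
    zetaMap wp wm p ∈ Xf f := by
  obtain ⟨v, w⟩ := p
  obtain ⟨y, hy, rfl⟩ := (fsRound_image_closure_YfSet f).ge hp.1
  have hcentral : centralDefect f w0 y + w ∈ centralSubmodule f :=
    Submodule.add_mem _ (centralDefect_mem h.mem_centralSubmodule y) hp.2
  rw [h.zetaMap_fsRound hy]
  refine coe_mem_Xf_iff (y := y + ⇑(centralDefect f w0 y + w)).2 fun n => ?_
  exact ⟨fsRound f y n, by rw [fsR_add, Pi.add_apply, hcentral n, add_zero, coe_fsRound hy]⟩

lemma mapsTo_shiftT_zetaMap_image {C : Set ((ℤ → ℤ) × (ℤ →ᵇ ℝ))} (hC : ∀ p ∈ C, p.1 ∈ ZbarZ f)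
    (hCinv : Set.MapsTo (tauMap w0) C C) :
    Set.MapsTo shiftT (zetaMap wp wm '' C) (zetaMap wp wm '' C) := by
  rintro _ ⟨p, hp, rfl⟩
  exact ⟨tauMap w0 p, hCinv hp, h.zetaMap_tauMap (bdd_of_mem_ZbarZ (hC p hp))⟩

lemma zetaMap_image_eq (hnc : Noncyclotomic f) {C : Set ((ℤ → ℤ) × (ℤ →ᵇ ℝ))} (hC : IsCompact C)
    (hCsub : C ⊆ ZbarZ f ×ˢ WfCircB f) (hCinv : Set.MapsTo (tauMap w0) C C)
    (hCfst : Prod.fst '' C = ZbarZ f) : zetaMap wp wm '' C = Xf f := by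
  have hCZ : ∀ p ∈ C, p.1 ∈ ZbarZ f := fun p hp => (hCsub hp).1
  have hclosed : IsClosed (zetaMap wp wm '' C) :=
    (hC.image_of_continuousOn (h.continuousOn_zetaMap hCZ)).isClosed
  have hsub : zetaMap wp wm '' C ⊆ Xf f :=
    Set.image_subset_iff.2 fun p hp => h.zetaMap_mem_Xf (hCsub hp)
  obtain ⟨x₀, hx₀⟩ := hnc.exists_mem_closure_orbit h.ne_zero
  obtain ⟨y, hy, hyx₀⟩ := exists_mem_YfSet_coe_eq (mem_XfGroup.1 x₀.2)
  obtain ⟨⟨_, w⟩, hp, rfl⟩ := hCfst.ge ((fsRound_image_closure_YfSet f).le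
    ⟨y, subset_closure hy, rfl⟩)
  set w' := centralDefect f w0 y + w
  have hw'mem : w' ∈ centralSubmodule f :=
    Submodule.add_mem _ (centralDefect_mem h.mem_centralSubmodule y) (hCsub hp).2
  have hbase : (x₀ : ℤ → Torus) + rhoB w' ∈ zetaMap wp wm '' C :=
    ⟨_, hp, by rw [h.zetaMap_fsRound (subset_closure hy), hyx₀]⟩
  have htranslate (x : XfGroup f) : (x : ℤ → Torus) + rhoB w' ∈ zetaMap wp wm '' C :=
    add_rhoB_mem_of_mem_closure hclosed (h.mapsTo_shiftT_zetaMap_image hCZ hCinv) hbase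
      (hx₀ x w' hw'mem)
  -- The image contains the translate of `X_f` by its own element `ρ(w')`.
  have hrho : rhoB w' ∈ XfGroup f := mem_XfGroup.2 (by simpa using hsub (htranslate 0))
  exact hsub.antisymm fun x hx => by
    simpa using htranslate (⟨x, mem_XfGroup.2 hx⟩ - ⟨_, hrho⟩)

end IsHomoclinicTriple

end Image

section SignPatterns

variable {ι : Type*}

lemma dotProduct_nonneg_of_forall_exists_nonneg_iff [Fintype ι] {V : Set (ι → ℝ)} {b c : ι → ℝ}
    (hV : ∀ s : Set ι, ∃ d ∈ V, ∀ i, 0 ≤ d i + b i ↔ i ∈ s) (hc : ∀ d ∈ V, c ⬝ᵥ d = 0) :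
    0 ≤ c ⬝ᵥ b ∧ (c ⬝ᵥ b = 0 → 0 ≤ c) := by
  obtain ⟨d, hd, hsign⟩ := hV {i | 0 ≤ c i}
  have hterm (i : ι) : 0 ≤ c i * (d i + b i) := by
    rcases le_or_gt 0 (c i) with hi | hi
    · exact mul_nonneg hi ((hsign i).2 hi)
    · exact mul_nonneg_of_nonpos_of_nonpos hi.le
        (not_le.1 fun hdb => hi.not_ge ((hsign i).1 hdb)).le
  have hsum : c ⬝ᵥ b = ∑ i, c i * (d i + b i) := by
    rw [← zero_add (c ⬝ᵥ b), ← hc d hd, ← dotProduct_add]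
    rfl
  refine ⟨hsum ▸ Finset.sum_nonneg fun i _ => hterm i, fun hzero i => ?_⟩
  by_contra hi
  refine (mul_pos_of_neg_of_neg (not_le.1 hi)
    (not_le.1 fun hdb => hi ((hsign i).1 hdb))).ne' ?_
  exact (Finset.sum_eq_zero_iff_of_nonneg fun i _ => hterm i).1 (hsum ▸ hzero) i
    (Finset.mem_univ i)

lemma eq_top_of_forall_exists_nonneg_iff [Finite ι] {V : Submodule ℝ (ι → ℝ)} {b : ι → ℝ}
    (hV : ∀ s : Set ι, ∃ d ∈ V, ∀ i, 0 ≤ d i + b i ↔ i ∈ s) : V = ⊤ := by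
  classical
  cases nonempty_fintype ι
  by_contra htop
  obtain ⟨φ, hφ, hVφ⟩ := V.exists_le_ker_of_lt_top (lt_top_iff_ne_top.2 htop)
  obtain ⟨c, rfl⟩ := (dotProductEquiv ℝ ι).surjective φ
  have hc : ∀ d ∈ (V : Set (ι → ℝ)), c ⬝ᵥ d = 0 := fun d hd => hVφ hd
  have hpos := dotProduct_nonneg_of_forall_exists_nonneg_iff hV hc
  have hneg := dotProduct_nonneg_of_forall_exists_nonneg_iff (c := -c) hV fun d hd => by
    rw [neg_dotProduct, hc d hd, neg_zero]
  rw [neg_dotProduct, neg_nonneg, neg_eq_zero, neg_nonneg] at hneg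
  have hcb := le_antisymm hneg.1 hpos.1
  have hzero : c = 0 := le_antisymm (hneg.2 hcb) (hpos.2 hcb)
  exact hφ (by rw [hzero, map_zero])

lemma vcDim_le_finrank [Finite ι] [DecidableEq ι] (V : Submodule ℝ (ι → ℝ)) (b : ι → ℝ)
    {𝒜 : Finset (Finset ι)} (h𝒜 : ∀ A ∈ 𝒜, ∃ d ∈ V, ∀ i, i ∈ A ↔ 0 ≤ d i + b i) :
    𝒜.vcDim ≤ Module.finrank ℝ V := by
  classical
  refine Finset.sup_le fun S hS => ?_
  rw [Finset.mem_shatterer] at hS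
  have htop : V.map (LinearMap.funLeft ℝ ℝ ((↑) : S → ι)) = ⊤ := by
    refine eq_top_of_forall_exists_nonneg_iff (b := fun i => b i) fun s => ?_
    obtain ⟨A, hA, hSA⟩ := hS (t := S.filter fun i => ∃ hi : i ∈ S, ⟨i, hi⟩ ∈ s)
      (Finset.filter_subset _ _)
    obtain ⟨d, hd, hdA⟩ := h𝒜 A hA
    refine ⟨_, Submodule.mem_map_of_mem hd, fun i => (hdA i).symm.trans ?_⟩
    simpa using Finset.ext_iff.1 hSA i
  calc S.card = Module.finrank ℝ (⊤ : Submodule ℝ (S → ℝ)) := by simp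
    _ ≤ Module.finrank ℝ V := htop ▸ Submodule.finrank_map_le _ V

lemma card_le_of_vcDim_le [Fintype ι] [DecidableEq ι] {𝒜 : Finset (Finset ι)} {m : ℕ}
    (h : 𝒜.vcDim ≤ m) :
    𝒜.card ≤ (m + 1) * (Fintype.card ι + 1) ^ m := by
  calc 𝒜.card ≤ ∑ k ∈ Finset.Iic 𝒜.vcDim, (Fintype.card ι).choose k :=
        (Finset.card_le_card_shatterer 𝒜).trans Finset.card_shatterer_le_sum_vcDim
    _ ≤ ∑ k ∈ Finset.Iic m, (Fintype.card ι).choose k :=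
        Finset.sum_le_sum_of_subset (Finset.Iic_subset_Iic.2 h)
    _ ≤ ∑ _k ∈ Finset.Iic m, (Fintype.card ι + 1) ^ m := Finset.sum_le_sum fun k hk =>
        (Nat.choose_le_pow _ k).trans <| (Nat.pow_le_pow_left (Nat.le_succ _) k).trans <|
          Nat.pow_le_pow_right (Nat.succ_pos _) (Finset.mem_Iic.1 hk)
    _ = (m + 1) * (Fintype.card ι + 1) ^ m := by simp

end SignPatterns

section BlockCount

variable {f : ℤ[X]}

/-- The restrictions to the window `[a, a + N + deg f)` of the sequences `d` with
`f(σ̄) d = 0` on `[a, a + N)`. -/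
def windowSolutions (f : ℤ[X]) (a : ℤ) (N : ℕ) : Submodule ℝ (Fin (N + f.natDegree) → ℝ) :=
  Submodule.map (LinearMap.funLeft ℝ ℝ fun i : Fin (N + f.natDegree) => a + (i : ℕ))
    { carrier := {d : ℤ → ℝ | ∀ n < N, fsR f d (a + (n : ℕ)) = 0}
      add_mem' := fun hd he n hn => by
        rw [fsR_add, Pi.add_apply, hd n hn, he n hn, add_zero]
      zero_mem' := fun n _ => by simp [fsR]
      smul_mem' := fun r d hd n hn => by
        rw [fsR_smul, Pi.smul_apply, hd n hn, smul_zero] }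

lemma restrict_mem_windowSolutions {a : ℤ} {N : ℕ} {d : ℤ → ℝ}
    (hd : ∀ n < N, fsR f d (a + (n : ℕ)) = 0) :
    (fun i : Fin (N + f.natDegree) => d (a + (i : ℕ))) ∈ windowSolutions f a N :=
  ⟨d, hd, rfl⟩

lemma finrank_windowSolutions_le (hf : f ≠ 0) (a : ℤ) (N : ℕ) :
    Module.finrank ℝ (windowSolutions f a N) ≤ f.natDegree := by
  let initial : windowSolutions f a N →ₗ[ℝ] (Fin f.natDegree → ℝ) :=
    LinearMap.funLeft ℝ ℝ (Fin.castLE (Nat.le_add_left _ N)) ∘ₗ (windowSolutions f a N).subtype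
  have hinj : Function.Injective initial := by
    refine (injective_iff_map_eq_zero initial).2 ?_
    rintro ⟨_, d, hd, rfl⟩ hzero
    refine Subtype.ext (funext fun i => ?_)
    exact eq_zero_of_fsR_eq_zero_of_initial hf hd (fun j hj => congrFun hzero ⟨j, hj⟩) i i.2
  simpa using LinearMap.finrank_le_finrank_of_injective hinj

/-- The representative in `[-1/2, 1/2)` of `y - r` modulo one. -/
def circleDiff (y r : ℤ → ℝ) : ℤ → ℝ := fun k => y k - r k - round (y k - r k)

lemma abs_circleDiff_lt {y r : ℤ → ℝ} {c : Torus} {ε : ℝ} {k : ℤ}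
    (hy : ‖(y k : Torus) - c‖ < ε) (hr : ‖(r k : Torus) - c‖ < ε) :
    |circleDiff y r k| < 2 * ε := by
  rw [circleDiff, ← UnitAddCircle.norm_eq, AddCircle.coe_sub, ← sub_sub_sub_cancel_right _ _ c]
  exact (norm_sub_le _ _).trans_lt (by linarith)

lemma fsR_circleDiff_eq_zero {y r : ℤ → ℝ} {δ : ℝ} {n : ℤ} (hy : ∃ z : ℤ, fsR f y n = z)
    (hr : ∃ z : ℤ, fsR f r n = z) (hδ : coeffNorm f * δ < 1)
    (hsmall : ∀ k ≤ f.natDegree, |circleDiff y r (n + (k : ℤ))| ≤ δ) :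
    fsR f (circleDiff y r) n = 0 := by
  obtain ⟨z, hz⟩ := hy
  obtain ⟨z', hz'⟩ := hr
  obtain ⟨q, hq⟩ : ∃ q : ℤ, fsR f (circleDiff y r) n = q := by
    refine ⟨z - z' - ∑ k ∈ Finset.range (f.natDegree + 1),
      f.coeff k * round (y (n + k) - r (n + k)), ?_⟩
    push_cast
    rw [← hz, ← hz']
    simp only [fsR, circleDiff, mul_sub, Finset.sum_sub_distrib]
  have hlt : |q| < 1 := by exact_mod_cast (hq ▸ (abs_fsR_le hsmall).trans_lt hδ : |(q : ℝ)| < 1)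
  rw [hq, Int.abs_lt_one_iff.1 hlt, Int.cast_zero]

-- For `|d| < 1/2` the carry `⌊r + d⌋ - round r` is `0` or `-1`, according to a sign.
lemma floor_add_eq_round_add_ite {r d : ℝ} (hd : |d| < 1 / 2) :
    ⌊r + d⌋ = round r + if 0 ≤ d + (r - round r) then 0 else -1 := by
  obtain ⟨hd₁, hd₂⟩ := abs_lt.1 hd
  obtain ⟨hr₁, hr₂⟩ := abs_le.1 (abs_sub_round r)
  split_ifs with h <;> rw [Int.floor_eq_iff] <;> push_cast <;> constructor <;> linarith

lemma round_sub_eq_neg_floor {y r : ℤ → ℝ} {k : ℤ} (hy : y k ∈ Set.Ico (0 : ℝ) 1) :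
    round (y k - r k) = -⌊r k + circleDiff y r k⌋ := by
  rw [circleDiff, add_sub_assoc', add_sub_cancel, Int.floor_sub_intCast,
    Int.floor_eq_zero_iff.2 hy]
  ring

/-- The coordinates in the window `[a, a + N)` at which `r + circleDiff y r` stays above the nearest
integer to `r`. -/
def signPattern (a : ℤ) (N : ℕ) (y r : ℤ → ℝ) : Finset (Fin N) :=
  {i | 0 ≤ circleDiff y r (a + (i : ℕ)) + (r (a + (i : ℕ)) - round (r (a + (i : ℕ))))}

lemma mem_signPattern {a : ℤ} {N : ℕ} {y r : ℤ → ℝ} {i : Fin N} : i ∈ signPattern a N y r ↔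
    0 ≤ circleDiff y r (a + (i : ℕ)) + (r (a + (i : ℕ)) - round (r (a + (i : ℕ)))) := by
  simp [signPattern]

lemma sub_circleDiff_eq_of_signPattern_eq {a : ℤ} {N : ℕ} {y y' r : ℤ → ℝ}
    (hy : ∀ k, y k ∈ Set.Ico (0 : ℝ) 1) (hy' : ∀ k, y' k ∈ Set.Ico (0 : ℝ) 1)
    (hsmall : ∀ i < N, |circleDiff y r (a + (i : ℕ))| < 1 / 2)
    (hsmall' : ∀ i < N, |circleDiff y' r (a + (i : ℕ))| < 1 / 2)
    (heq : signPattern a N y r = signPattern a N y' r) {i : ℕ} (hi : i < N) :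
    (y - circleDiff y r) (a + i) = (y' - circleDiff y' r) (a + i) := by
  have hsign := Finset.ext_iff.1 heq ⟨i, hi⟩
  simp only [mem_signPattern] at hsign
  have hround : round (y (a + i) - r (a + i)) = round (y' (a + i) - r (a + i)) := by
    rw [round_sub_eq_neg_floor (hy _), round_sub_eq_neg_floor (hy' _),
      floor_add_eq_round_add_ite (hsmall i hi), floor_add_eq_round_add_ite (hsmall' i hi)]
    simp only [hsign]
  simp only [Pi.sub_apply, circleDiff, hround, sub_sub_eq_add_sub]
  ring

lemma fsR_eq_of_signPattern_eq {a : ℤ} {M : ℕ} {y y' r : ℤ → ℝ}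
    (hy : ∀ k, y k ∈ Set.Ico (0 : ℝ) 1) (hy' : ∀ k, y' k ∈ Set.Ico (0 : ℝ) 1)
    (hsmall : ∀ i < M + f.natDegree, |circleDiff y r (a + (i : ℕ))| < 1 / 2)
    (hsmall' : ∀ i < M + f.natDegree, |circleDiff y' r (a + (i : ℕ))| < 1 / 2)
    (heq : signPattern a (M + f.natDegree) y r = signPattern a (M + f.natDegree) y' r)
    {n : ℕ} (hn : n < M) (hker : fsR f (circleDiff y r) (a + n) = 0)
    (hker' : fsR f (circleDiff y' r) (a + n) = 0) : fsR f y (a + n) = fsR f y' (a + n) := by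
  have hsub (z : ℤ → ℝ) (hz : fsR f (circleDiff z r) (a + n) = 0) :
      fsR f z (a + n) = fsR f (z - circleDiff z r) (a + n) := by
    rw [fsR_sub, Pi.sub_apply, hz, sub_zero]
  rw [hsub y hker, hsub y' hker']
  refine Finset.sum_congr rfl fun k hk => congrArg _ ?_
  rw [add_assoc, ← Nat.cast_add]
  exact sub_circleDiff_eq_of_signPattern_eq hy hy' hsmall hsmall' heq
    (by have := Finset.mem_range.1 hk; omega)

lemma card_blocks_near_le (hf : f ≠ 0) {ε : ℝ} (hε4 : ε ≤ 1 / 4) (hε : coeffNorm f * (2 * ε) < 1)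
    (a : ℤ) (M : ℕ) (c : ℤ → Torus) (F : Finset (Fin M → ℤ))
    (hF : ∀ β ∈ F, ∃ y ∈ YfSet f, (∀ i : Fin M, fsR f y (a + (i : ℕ)) = β i) ∧
      ∀ k < M + f.natDegree, ‖(y (a + (k : ℕ)) : Torus) - c (a + (k : ℕ))‖ < ε) :
    F.card ≤ (f.natDegree + 1) * (M + f.natDegree + 1) ^ f.natDegree := by
  rcases F.eq_empty_or_nonempty with rfl | ⟨β₀, hβ₀⟩
  · simp
  choose! y hyY hyβ hyc using hF
  set r := y β₀
  have hsmall : ∀ β ∈ F, ∀ k < M + f.natDegree, |circleDiff (y β) r (a + (k : ℕ))| < 2 * ε :=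
    fun β hβ k hk => abs_circleDiff_lt (hyc β hβ k hk) (hyc β₀ hβ₀ k hk)
  have hhalf : ∀ β ∈ F, ∀ k < M + f.natDegree, |circleDiff (y β) r (a + (k : ℕ))| < 1 / 2 :=
    fun β hβ k hk => (hsmall β hβ k hk).trans_le (by linarith)
  have hker : ∀ β ∈ F, ∀ n < M, fsR f (circleDiff (y β) r) (a + (n : ℕ)) = 0 := by
    refine fun β hβ n hn => fsR_circleDiff_eq_zero ((hyY β hβ).1.2 _) ((hyY β₀ hβ₀).1.2 _) hε
      fun k hk => ?_
    rw [add_assoc, ← Nat.cast_add]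
    exact (hsmall β hβ _ (by omega)).le
  have hinj : Set.InjOn (fun β => signPattern a (M + f.natDegree) (y β) r) F := by
    refine fun β hβ β' hβ' heq => funext fun i => ?_
    have hfsR := fsR_eq_of_signPattern_eq (hyY β hβ).2 (hyY β' hβ').2 (hhalf β hβ) (hhalf β' hβ')
      heq i.2 (hker β hβ i i.2) (hker β' hβ' i i.2)
    rw [hyβ β hβ i, hyβ β' hβ' i] at hfsR
    exact_mod_cast hfsR
  classical
  rw [← Finset.card_image_of_injOn hinj]
  refine (card_le_of_vcDim_le ((vcDim_le_finrank (windowSolutions f a M)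
    (fun i => r (a + (i : ℕ)) - round (r (a + (i : ℕ)))) fun A hA => ?_).trans
    (finrank_windowSolutions_le hf a M))).trans_eq (by rw [Fintype.card_fin])
  obtain ⟨β, hβ, rfl⟩ := Finset.mem_image.1 hA
  exact ⟨_, restrict_mem_windowSolutions (hker β hβ), fun i => mem_signPattern⟩

end BlockCount

section EntropyComparison

lemma expGrowthSup_mul_pow_le (B K m : ℕ) :
    ExpGrowth.expGrowthSup (fun n : ℕ => ((B * (n + K) ^ m : ℕ) : ENNReal)) ≤ 0 := by
  refine EReal.le_of_forall_lt_iff_le.1 fun b hb => Eventually.expGrowthSup_le ?_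
  have hb' : 0 < b := by exact_mod_cast hb
  have hlittle := (isLittleO_pow_exp_pos_mul_atTop (k := m) hb').comp_tendsto
    (tendsto_atTop_add_const_right atTop (K : ℝ) tendsto_natCast_atTop_atTop)
  filter_upwards [hlittle.bound (c := ((B + 1) * Real.exp (b * K))⁻¹) (by positivity)] with n hn
  have hexp : EReal.exp ((b : EReal) * n) = ENNReal.ofReal (Real.exp (b * n)) := by
    rw [← EReal.exp_coe]
    push_cast
    rfl
  rw [hexp, ← ENNReal.ofReal_natCast]
  refine ENNReal.ofReal_le_ofReal ?_
  simp only [Function.comp_apply, norm_pow, Real.norm_eq_abs, Real.abs_exp] at hn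
  rw [abs_of_nonneg (by positivity), mul_add, Real.exp_add] at hn
  calc ((B * (n + K) ^ m : ℕ) : ℝ) ≤ (B + 1) * ((n : ℝ) + K) ^ m := by
        push_cast
        gcongr
        linarith
    _ ≤ (B + 1) * (((B + 1) * Real.exp (b * K))⁻¹ * (Real.exp (b * n) * Real.exp (b * K))) := by
        gcongr
    _ = Real.exp (b * n) := by field_simp

lemma coverEntropy_le_of_coverMincard_le {X Y : Type*} [UniformSpace X] [UniformSpace Y]
    {T : X → X} {S : Y → Y} {F : Set X} {G : Set Y}
    (h : ∀ U ∈ uniformity X, ∃ V ∈ uniformity Y, ∃ B K m : ℕ, ∀ n > 0,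
      Dynamics.coverMincard T F U n ≤
        (B * (n + K) ^ m : ℕ) * Dynamics.coverMincard S G V n) :
    Dynamics.coverEntropy T F ≤ Dynamics.coverEntropy S G := by
  refine iSup₂_le fun U hU => ?_
  obtain ⟨V, hV, B, K, m, hle⟩ := h U hU
  refine le_trans ?_ (Dynamics.coverEntropyEntourage_le_coverEntropy S G hV)
  rcases eq_or_ne (Dynamics.coverEntropyEntourage S G V) ⊤ with htop | htop
  · exact htop ▸ le_top
  have hpoly := expGrowthSup_mul_pow_le B K m
  calc Dynamics.coverEntropyEntourage T F U
      ≤ ExpGrowth.expGrowthSup ((fun n : ℕ => ((B * (n + K) ^ m : ℕ) : ENNReal)) *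
          fun n => (Dynamics.coverMincard S G V n : ENNReal)) := by
        refine ExpGrowth.expGrowthSup_eventually_monotone ?_
        filter_upwards [eventually_gt_atTop 0] with n hn
        have := ENat.toENNReal_le.2 (hle n hn)
        rwa [ENat.toENNReal_mul, ENat.toENNReal_coe] at this
    _ ≤ _ + Dynamics.coverEntropyEntourage S G V := ExpGrowth.expGrowthSup_mul_le (Or.inr htop)
        (Or.inl (ne_top_of_le_ne_top EReal.zero_ne_top hpoly))
    _ ≤ 0 + Dynamics.coverEntropyEntourage S G V := by gcongr
    _ = Dynamics.coverEntropyEntourage S G V := zero_add _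

lemma coverMincard_le_card_of_mapsTo {X Y : Type*} {T : X → X} {F : Set X} {U : SetRel X X}
    {n : ℕ} {κ : X → Y} {P : Finset Y} (hκ : Set.MapsTo κ F P)
    (hU : ∀ x ∈ F, ∀ x' ∈ F, κ x = κ x' → (x, x') ∈ Dynamics.dynEntourage T U n) :
    Dynamics.coverMincard T F U n ≤ P.card := by
  classical
  obtain ⟨s, hsF, hs⟩ := Set.exists_subset_bijOn F κ
  have hfin : s.Finite := Set.Finite.of_injOn (hκ.mono_left hsF) hs.injOn P.finite_toSet
  lift s to Finset X using hfin
  have hcover : Dynamics.IsDynCoverOf T F U n s := fun x hx => by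
    obtain ⟨x', hx', heq⟩ := hs.surjOn ⟨x, hx, rfl⟩
    exact ⟨x', hx', hU x hx x' (hsF hx') heq.symm⟩
  refine hcover.coverMincard_le_card.trans ?_
  exact_mod_cast Finset.card_le_card_of_injOn κ (fun x hx => hκ (hsF hx)) hs.injOn

lemma exists_forall_abs_le_eq_imp_mem_uniformity {M : Type*} [UniformSpace M]
    {A : SetRel (ℤ → M) (ℤ → M)} (hA : A ∈ uniformity (ℤ → M)) :
    ∃ L : ℕ, ∀ v v' : ℤ → M, (∀ j : ℤ, |j| ≤ L → v j = v' j) → (v, v') ∈ A := by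
  have hle : ⨅ j : ℤ, 𝓟 {p : (ℤ → M) × (ℤ → M) | p.1 j = p.2 j} ≤ uniformity (ℤ → M) := by
    rw [Pi.uniformity]
    refine iInf_mono fun j => map_le_iff_le_comap.1 fun S hS => mem_principal.2 fun p hp => ?_
    rw [Set.mem_preimage, show p.1 j = p.2 j from hp]
    exact refl_mem_uniformity hS
  obtain ⟨J, hJ, hJA⟩ := (Filter.hasBasis_iInf_principal_finite _).mem_iff.1 (hle hA)
  obtain ⟨L, hL⟩ := (hJ.image Int.natAbs).bddAbove
  refine ⟨L, fun v v' h => hJA (Set.mem_iInter₂.2 fun j hj => h j ?_)⟩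
  rw [Int.abs_eq_natAbs]
  exact_mod_cast hL ⟨j, hj, rfl⟩

end EntropyComparison

section Entropy

/-- The entourage of `𝕋^ℤ` consisting of the pairs that are `ε`-close on `[-R, R]`. -/
def torusEntourage (R : ℕ) (ε : ℝ) : SetRel (ℤ → Torus) (ℤ → Torus) :=
  {p | ∀ j : ℤ, |j| ≤ R → ‖p.1 j - p.2 j‖ < ε}

lemma torusEntourage_mem_uniformity (R : ℕ) {ε : ℝ} (hε : 0 < ε) :
    torusEntourage R ε ∈ uniformity (ℤ → Torus) := by
  have hcoord (j : ℤ) :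
      {p : (ℤ → Torus) × (ℤ → Torus) | ‖p.1 j - p.2 j‖ < ε} ∈ uniformity (ℤ → Torus) := by
    have h := Filter.mem_map.1
      (Pi.uniformContinuous_proj (fun _ : ℤ => Torus) j (Metric.dist_mem_uniformity hε))
    simp only [dist_eq_norm] at h
    exact h
  filter_upwards [(Filter.biInter_finset_mem (Finset.Icc (-(R : ℤ)) R)).2 fun j _ => hcoord j]
    with p hp j hj
  exact Set.mem_iInter₂.1 hp j (Finset.mem_Icc.2 (abs_le.1 hj))

lemma norm_sub_lt_of_mem_dynEntourage {R n : ℕ} {ε : ℝ} (hn : 0 < n) {x c : ℤ → Torus}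
    (h : (x, c) ∈ Dynamics.dynEntourage shiftT (torusEntourage R ε) n) {j : ℤ} (hj : -R ≤ j)
    (hjn : j < n + R) : ‖x j - c j‖ < ε := by
  obtain ⟨k, hk, hjk⟩ : ∃ k < n, |j - k| ≤ R :=
    ⟨min j.toNat (n - 1), by omega, by rw [abs_le]; omega⟩
  simpa only [shiftT_iterate_apply, sub_add_cancel] using
    Dynamics.mem_dynEntourage.1 h k hk (j - k) hjk

variable {f : ℤ[X]}

lemma card_blocks_le (hf : f ≠ 0) {ε : ℝ} (hε4 : ε ≤ 1 / 4) (hε : coeffNorm f * (2 * ε) < 1)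
    (L : ℕ) {n : ℕ} (hn : 0 < n) {s : Finset (ℤ → Torus)}
    (hs : Dynamics.IsDynCoverOf shiftT (Xf f) (torusEntourage (L + f.natDegree) ε) n s)
    (F : Finset (Fin (n + 2 * L) → ℤ))
    (hF : ∀ β ∈ F, ∃ y ∈ YfSet f, ∀ i : Fin (n + 2 * L), fsR f y (-L + (i : ℕ)) = β i) :
    F.card ≤ (f.natDegree + 1) * (n + 2 * L + f.natDegree + 1) ^ f.natDegree * s.card := by
  classical
  choose! y hyY hyβ using hF
  have hc : ∀ β ∈ F, ∃ c ∈ s, ∀ k < n + 2 * L + f.natDegree,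
      ‖(y β (-L + (k : ℕ)) : Torus) - c (-L + (k : ℕ))‖ < ε := by
    intro β hβ
    obtain ⟨c, hcs, hc⟩ := hs (coe_mem_Xf_iff.2 (hyY β hβ).1.2)
    exact ⟨c, hcs, fun k hk => norm_sub_lt_of_mem_dynEntourage hn hc (by omega) (by omega)⟩
  choose! c hcs hc using hc
  refine Finset.card_le_mul_card_image_of_maps_to hcs _ fun x _ => ?_
  refine card_blocks_near_le hf hε4 hε (-L) _ x _ fun β hβ => ?_
  obtain ⟨hβF, rfl⟩ := Finset.mem_filter.1 hβ
  exact ⟨y β, hyY β hβF, hyβ β hβF, hc β hβF⟩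

lemma exists_mem_YfSet_fsR_eq {v : ℤ → ℤ} (hv : v ∈ ZbarZ f) {J : Set ℤ} (hJ : J.Finite) :
    ∃ y ∈ YfSet f, ∀ j ∈ J, fsR f y j = v j := by
  obtain ⟨y, hy, hyv⟩ := hv
  have hnhds : ∀ᶠ y' in 𝓝 y, ∀ j ∈ J, |fsR f y' j - v j| < 1 := by
    refine (Filter.eventually_all_finite hJ).2 fun j _ => ?_
    have hcont : Tendsto (fun y' => fsR f y' j) (𝓝 y) (𝓝 (v j)) := by
      rw [← congrFun hyv j]
      exact ((continuous_apply j).comp (continuous_fsR f)).continuousAt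
    exact hcont.eventually (Metric.ball_mem_nhds _ one_pos)
  obtain ⟨y', hy', hy'Y⟩ := mem_closure_iff_nhds.1 hy _ hnhds
  refine ⟨y', hy'Y, fun j hj => ?_⟩
  obtain ⟨z, hz⟩ := hy'Y.1.2 j
  have hlt : |z - v j| < 1 := by
    have := hy' j hj
    rw [hz] at this
    exact_mod_cast this
  rw [hz, sub_eq_zero.1 (Int.abs_lt_one_iff.1 hlt)]

lemma tauMap_iterate_fst (w0 : ℤ →ᵇ ℝ) (p : (ℤ → ℤ) × (ℤ →ᵇ ℝ)) (k : ℕ) (j : ℤ) :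
    ((tauMap w0)^[k] p).1 j = p.1 (j + k) := by
  induction k generalizing j with
  | zero => simp
  | succ k ih =>
    rw [Function.iterate_succ_apply']
    refine (ih (j + 1)).trans (congrArg p.1 ?_)
    push_cast
    ring

lemma dist_tauMap_iterate_snd (w0 : ℤ →ᵇ ℝ) {p q : (ℤ → ℤ) × (ℤ →ᵇ ℝ)} {k : ℕ}
    (h : ∀ i : ℕ, i < k → p.1 i = q.1 i) :
    dist ((tauMap w0)^[k] p).2 ((tauMap w0)^[k] q).2 = dist p.2 q.2 := by
  induction k with
  | zero => rfl
  | succ k ih =>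
    rw [← ih fun i hi => h i (by omega), Function.iterate_succ_apply', Function.iterate_succ_apply']
    change dist (shiftB _ + _) (shiftB _ + _) = _
    rw [tauMap_iterate_fst, tauMap_iterate_fst, zero_add, h k (by omega), dist_add_right,
      dist_eq_norm, dist_eq_norm]
    exact norm_translB 1 (((tauMap w0)^[k] p).2 - ((tauMap w0)^[k] q).2)

lemma exists_forall_mem_dynEntourage_tauMap (w0 : ℤ →ᵇ ℝ)
    {U : SetRel ((ℤ → ℤ) × (ℤ →ᵇ ℝ)) ((ℤ → ℤ) × (ℤ →ᵇ ℝ))}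
    (hU : U ∈ uniformity ((ℤ → ℤ) × (ℤ →ᵇ ℝ))) :
    ∃ L : ℕ, ∃ δ > 0, ∀ (n : ℕ) (p q : (ℤ → ℤ) × (ℤ →ᵇ ℝ)),
      (∀ i < n + 2 * L, p.1 (-L + (i : ℕ)) = q.1 (-L + (i : ℕ))) → dist p.2 q.2 < δ →
        (p, q) ∈ Dynamics.dynEntourage (tauMap w0) U n := by
  obtain ⟨A, hA, B, hB, hAB⟩ := entourageProd_subset hU
  obtain ⟨L, hL⟩ := exists_forall_abs_le_eq_imp_mem_uniformity hA
  obtain ⟨δ, hδ, hδB⟩ := Metric.mem_uniformity_dist.1 hB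
  refine ⟨L, δ, hδ, fun n p q hpq hdist => ?_⟩
  have hagree {j : ℤ} (hj : -(L : ℤ) ≤ j) (hjn : j < n + L) : p.1 j = q.1 j := by
    simpa [show ((j + L).toNat : ℤ) = j + L by omega] using hpq (j + L).toNat (by omega)
  refine Dynamics.mem_dynEntourage.2 fun k hk => hAB ⟨?_, ?_⟩
  · refine hL _ _ fun j hj => ?_
    rw [abs_le] at hj
    rw [tauMap_iterate_fst, tauMap_iterate_fst]
    exact hagree (by omega) (by omega)
  · refine hδB ?_
    rwa [dist_tauMap_iterate_snd w0 fun i hi => hagree (by omega) (by omega)]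

lemma finite_range_blocks (f : ℤ[X]) (a : ℤ) (M : ℕ) :
    ((fun v (i : Fin M) => v (a + (i : ℕ))) '' ZbarZ f).Finite := by
  refine (Set.finite_Icc (fun _ : Fin M => -⌈coeffNorm f⌉) fun _ => ⌈coeffNorm f⌉).subset ?_
  rintro _ ⟨v, hv, rfl⟩
  have hb (i : Fin M) : |v (a + (i : ℕ))| ≤ ⌈coeffNorm f⌉ := by
    exact_mod_cast (abs_le_of_mem_ZbarZ hv _).trans (Int.le_ceil _)
  exact ⟨fun i => (abs_le.1 (hb i)).1, fun i => (abs_le.1 (hb i)).2⟩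

lemma exists_pos_le_coeffNorm_mul_lt (f : ℤ[X]) :
    ∃ ε > 0, ε ≤ 1 / 4 ∧ coeffNorm f * (2 * ε) < 1 := by
  have hnorm := coeffNorm_nonneg f
  refine ⟨1 / (4 * (coeffNorm f + 1)), by positivity,
    one_div_le_one_div_of_le (by norm_num) (by linarith), ?_⟩
  field_simp
  linarith

lemma exists_coverMincard_tauMap_le (hf : f ≠ 0) (w0 : ℤ →ᵇ ℝ) {C : Set ((ℤ → ℤ) × (ℤ →ᵇ ℝ))}
    (hC : IsCompact C) (hCZ : ∀ p ∈ C, p.1 ∈ ZbarZ f)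
    {U : SetRel ((ℤ → ℤ) × (ℤ →ᵇ ℝ)) ((ℤ → ℤ) × (ℤ →ᵇ ℝ))}
    (hU : U ∈ uniformity ((ℤ → ℤ) × (ℤ →ᵇ ℝ))) :
    ∃ V ∈ uniformity (ℤ → Torus), ∃ B K m : ℕ, ∀ n > 0,
      Dynamics.coverMincard (tauMap w0) C U n ≤
        (B * (n + K) ^ m : ℕ) * Dynamics.coverMincard shiftT (Xf f) V n := by
  obtain ⟨L, δ, hδ, hLδ⟩ := exists_forall_mem_dynEntourage_tauMap w0 hU
  obtain ⟨t, -, htfin, ht⟩ := (hC.image continuous_snd).finite_cover_balls (half_pos hδ)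
  lift t to Finset (ℤ →ᵇ ℝ) using htfin
  have hcentre : ∀ p ∈ C, ∃ q ∈ t, dist p.2 q < δ / 2 := fun p hp =>
    by simpa using ht ⟨p, hp, rfl⟩
  choose! centre hcentre_mem hcentre using hcentre
  obtain ⟨ε, hε, hε4, hεf⟩ := exists_pos_le_coeffNorm_mul_lt f
  have hV := torusEntourage_mem_uniformity (L + f.natDegree) hε
  refine ⟨_, hV, t.card * (f.natDegree + 1), 2 * L + f.natDegree + 1, f.natDegree, fun n hn => ?_⟩
  obtain ⟨s, hs, hscard⟩ := (Dynamics.coverMincard_finite_iff _ _ _ _).1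
    (Dynamics.coverMincard_finite_of_isCompact_invariant (isCompact_Xf f)
      (fun x hx => shiftT_mem_Xf hx) hV n)
  let block (v : ℤ → ℤ) (i : Fin (n + 2 * L)) : ℤ := v (-L + (i : ℕ))
  have hfin : (block '' ZbarZ f).Finite := finite_range_blocks f _ _
  have hblocks := card_blocks_le hf hε4 hεf L hn hs hfin.toFinset fun β hβ => by
    obtain ⟨v, hv, rfl⟩ := hfin.mem_toFinset.1 hβ
    obtain ⟨y, hy, hyv⟩ := exists_mem_YfSet_fsR_eq hv
      (Set.finite_range fun i : Fin (n + 2 * L) => -(L : ℤ) + (i : ℕ))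
    exact ⟨y, hy, fun i => hyv _ ⟨i, rfl⟩⟩
  refine (coverMincard_le_card_of_mapsTo (κ := fun p => (block p.1, centre p))
    (P := hfin.toFinset ×ˢ t) (fun p hp => ?_) fun p hp q hq heq => ?_).trans ?_
  · exact Finset.mem_product.2
      ⟨hfin.mem_toFinset.2 ⟨p.1, hCZ p hp, rfl⟩, hcentre_mem p hp⟩
  · obtain ⟨hblock, hpq⟩ := Prod.ext_iff.1 heq
    refine hLδ n p q (fun i hi => congrFun hblock ⟨i, hi⟩) ?_
    have hp := hcentre p hp
    have hq := hcentre q hq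
    rw [← show centre p = centre q from hpq] at hq
    linarith [dist_triangle_right p.2 q.2 (centre p)]
  · rw [← hscard, Finset.card_product]
    have hle := Nat.mul_le_mul_right t.card hblocks
    rw [show (f.natDegree + 1) * (n + 2 * L + f.natDegree + 1) ^ f.natDegree * s.card * t.card =
      t.card * (f.natDegree + 1) * (n + (2 * L + f.natDegree + 1)) ^ f.natDegree * s.card by
        rw [← add_assoc, ← add_assoc]; ring] at hle
    exact_mod_cast hle

lemma coverEntropy_tauMap_le (hf : f ≠ 0) (w0 : ℤ →ᵇ ℝ) {C : Set ((ℤ → ℤ) × (ℤ →ᵇ ℝ))}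
    (hC : IsCompact C) (hCZ : ∀ p ∈ C, p.1 ∈ ZbarZ f) :
    Dynamics.coverEntropy (tauMap w0) C ≤ Dynamics.coverEntropy shiftT (Xf f) :=
  coverEntropy_le_of_coverMincard_le fun _ => exists_coverMincard_tauMap_le hf w0 hC hCZ

lemma IsHomoclinicTriple.coverEntropy_zetaMap_image_le {wp wm : ℤ → ℝ} {w0 : ℤ →ᵇ ℝ}
    (h : IsHomoclinicTriple f wp wm w0) {C : Set ((ℤ → ℤ) × (ℤ →ᵇ ℝ))} (hC : IsCompact C)
    (hCZ : ∀ p ∈ C, p.1 ∈ ZbarZ f) (hCinv : Set.MapsTo (tauMap w0) C C) :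
    Dynamics.coverEntropy shiftT (zetaMap wp wm '' C) ≤ Dynamics.coverEntropy (tauMap w0) C := by
  have : CompactSpace C := isCompact_iff_compactSpace.1 hC
  have hcont : Continuous fun p : C => zetaMap wp wm p :=
    continuousOn_iff_continuous_domRestrict.1 (h.continuousOn_zetaMap hCZ)
  have hsemi : Function.Semiconj (fun p : C => zetaMap wp wm p)
      (hCinv.restrict (tauMap w0) C C) shiftT :=
    fun p => h.zetaMap_tauMap (bdd_of_mem_ZbarZ (hCZ p p.2))
  have hle := Dynamics.coverEntropy_image_le_of_uniformContinuous hsemi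
    (CompactSpace.uniformContinuous_of_continuous hcont) Set.univ
  rwa [Dynamics.coverEntropy_restrict hCinv, Set.image_univ, ← Set.image_eq_range] at hle

end Entropy

theorem equal_entropy_cover_nonexpansive_general (f : ℤ[X]) (hnc : Noncyclotomic f)
    (wp wm : ℤ → ℝ) (hwp : IsWplus f wp) (hwm : IsWminus f wm)
    (w0 : ℤ →ᵇ ℝ) (hw0 : ∀ n, w0 n = wm n - wp n) :
    (∃ C : Set ((ℤ → ℤ) × (ℤ →ᵇ ℝ)), IsCompact C ∧
      C ⊆ (ZbarZ f) ×ˢ (WfCircB f) ∧ tauMap w0 '' C = C ∧ Prod.fst '' C = ZbarZ f) ∧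
    (∀ C : Set ((ℤ → ℤ) × (ℤ →ᵇ ℝ)), IsCompact C →
      C ⊆ (ZbarZ f) ×ˢ (WfCircB f) → tauMap w0 '' C = C → Prod.fst '' C = ZbarZ f →
      Dynamics.coverEntropy (tauMap w0) C = Dynamics.coverEntropy shiftT (Xf f) ∧
      zetaMap wp wm '' C = Xf f) := by
  have h : IsHomoclinicTriple f wp wm w0 := ⟨hwp, hwm, hw0⟩
  refine ⟨⟨canonicalCover f w0, isCompact_canonicalCover f w0,
    canonicalCover_subset h.mem_centralSubmodule, h.tauMap_image_canonicalCover,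
    fst_image_canonicalCover f w0⟩, fun C hC hCsub hCinv hCfst => ?_⟩
  have hCZ : ∀ p ∈ C, p.1 ∈ ZbarZ f := fun p hp => (hCsub hp).1
  have hmaps : Set.MapsTo (tauMap w0) C C := Set.mapsTo_iff_image_subset.2 hCinv.subset
  have hζ := h.zetaMap_image_eq hnc hC hCsub hmaps hCfst
  exact ⟨(coverEntropy_tauMap_le h.ne_zero w0 hC hCZ).antisymm
    (hζ ▸ h.coverEntropy_zetaMap_image_le hC hCZ hmaps), hζ⟩

/-- there is a compact `τ`-invariant set `C ⊆ Z̄_f × W_f^∘` with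
`π₁(C) = Z̄_f`; moreover every such `C` satisfies `h(τ|_C) = h(α_f)` and `ζ(C) = X_f`. -/
theorem equal_entropy_cover_nonexpansive (f : Polynomial ℤ) (hm : 1 ≤ f.natDegree)
    (hlead : 0 < f.leadingCoeff) (h0 : f.coeff 0 ≠ 0)
    (hirr : Irreducible (Polynomial.toLaurent f)) (hnc : Noncyclotomic f)
    (wp wm : ℤ → ℝ) (hwp : IsWplus f wp) (hwm : IsWminus f wm)
    (w0 : ℤ →ᵇ ℝ) (hw0 : ∀ n, w0 n = wm n - wp n) :
    (∃ C : Set ((ℤ → ℤ) × (ℤ →ᵇ ℝ)), IsCompact C ∧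
      C ⊆ (ZbarZ f) ×ˢ (WfCircB f) ∧ tauMap w0 '' C = C ∧ Prod.fst '' C = ZbarZ f) ∧
    (∀ C : Set ((ℤ → ℤ) × (ℤ →ᵇ ℝ)), IsCompact C →
      C ⊆ (ZbarZ f) ×ˢ (WfCircB f) → tauMap w0 '' C = C → Prod.fst '' C = ZbarZ f →
      Dynamics.coverEntropy (tauMap w0) C = Dynamics.coverEntropy shiftT (Xf f) ∧
      zetaMap wp wm '' C = Xf f) := by
  exact equal_entropy_cover_nonexpansive_general f hnc wp wm hwp hwm w0 hw0

end
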